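/- arXiv:2110.11743 — 2 statements merged into one kernel-verified Lean document; each statement's English description precedes it below -/
import Mathlib

section
/- Let G = G(m,t,s) with m = 2q where q > 1 is odd, and gcd(t, m) = 1. Then there exist a homomorphism φ : ℤ₂ × U(m) → Aut(ℤ_{m/2}) and a homomorphism ψ : ℤ₂ → Aut(ℤ_{m/2} ⋊_φ (ℤ₂ × U(m))) such that Aut(G) ≅ (ℤ_{m/2} ⋊_φ (ℤ₂ × U(m))) ⋊_ψ ℤ₂. -/
/-- The defining relations of the group `G(m,t,s)`:
`a^m = 1`, `b⁴ = 1`, `ab = b³a^{2t+1}`, `a²b = ba^{2s}`, where `a` is the generator `0`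
and `b` is the generator `1`. -/
abbrev zsRels (m : ℕ) (t s : ℤ) : Set (FreeGroup (Fin 2)) :=
  {FreeGroup.of 0 ^ m,
   FreeGroup.of 1 ^ 4,
   FreeGroup.of 0 * FreeGroup.of 1 * (FreeGroup.of 1 ^ 3 * FreeGroup.of 0 ^ (2 * t + 1))⁻¹,
   FreeGroup.of 0 ^ 2 * FreeGroup.of 1 * (FreeGroup.of 1 * FreeGroup.of 0 ^ (2 * s))⁻¹}

/-- The group `G(m,t,s)`. -/
abbrev ZSGroup (m : ℕ) (t s : ℤ) := PresentedGroup (zsRels m t s)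

/-- The cyclic group `ℤ_n` of order `n`, written multiplicatively. -/
abbrev Zc (n : ℕ) := Multiplicative (ZMod n)

open DihedralGroup in
/-- The character of the dihedral group of order `8` that is trivial exactly on the noncentral
Klein four-group `{1, r 2, sr 0, sr 2}`. -/
def dihedralSign : DihedralGroup 4 →* ℤˣ where
  toFun
    | r i => if i = 0 ∨ i = 2 then 1 else -1
    | sr i => if i = 0 ∨ i = 2 then 1 else -1
  map_one' := by decide
  map_mul' := by decide

/-- The `{0, 1}`-valued parity attached to `dihedralSign`. -/
def dihedralParity (d : DihedralGroup 4) : ℤ :=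
  if dihedralSign d = 1 then 0 else 1

theorem dihedralParity_mul (d e : DihedralGroup 4) :
    dihedralParity (d * e) = dihedralParity d + dihedralSign d * dihedralParity e := by
  revert d e; decide

open DihedralGroup in
/-- The endomorphisms `r 1 ↦ r (1 + 2 * j)`, `sr 0 ↦ sr (2 * i)` of the dihedral group of
order `8`. -/
def dihedralEnd : Zc 2 × Zc 2 →* Monoid.End (DihedralGroup 4) where
  toFun p :=
    { toFun
        | r x => r ((1 + 2 * (p.2.toAdd.val : ZMod 4)) * x)
        | sr x => sr (2 * (p.1.toAdd.val : ZMod 4) + (1 + 2 * (p.2.toAdd.val : ZMod 4)) * x)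
      map_one' := by revert p; decide
      map_mul' := by revert p; decide }
  map_one' := by ext d; revert d; decide
  map_mul' p p' := by ext d; revert p p' d; decide

theorem dihedralSign_dihedralEnd (p : Zc 2 × Zc 2) (d : DihedralGroup 4) :
    dihedralSign (dihedralEnd p d) = dihedralSign d := by
  revert p d; decide

theorem dihedralParity_dihedralEnd (p : Zc 2 × Zc 2) (d : DihedralGroup 4) :
    dihedralParity (dihedralEnd p d) = dihedralParity d := by
  simp [dihedralParity, dihedralSign_dihedralEnd]

theorem zmod_eq_ofAdd_one_zpow {n : ℕ} (x : Zc n) :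
    ∃ k : ℤ, x = Multiplicative.ofAdd (1 : ZMod n) ^ k := by
  obtain ⟨k, hk⟩ := ZMod.intCast_surjective x.toAdd
  refine ⟨k, ?_⟩
  rw [← ofAdd_zsmul, zsmul_one, hk]
  rfl

/-- The action of the units of `ℤ/n` on the cyclic group of order `n` by multiplication. -/
def unitAction (n : ℕ) : (ZMod n)ˣ →* MulAut (Zc n) :=
  (MulAutMultiplicative (ZMod n)).symm.toMonoidHom.comp AddAut.mulLeft

theorem unitAction_apply {n : ℕ} (u : (ZMod n)ˣ) (x : Zc n) :
    unitAction n u x = .ofAdd (u * x.toAdd) := rfl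

/-- The dihedral group of order `8` acting on the cyclic group of order `n` by signs. -/
def signAction (n : ℕ) : DihedralGroup 4 →* MulAut (Zc n) :=
  (unitAction n).comp ((Units.map (Int.castRingHom (ZMod n)).toMonoidHom).comp dihedralSign)

theorem signAction_apply {n : ℕ} (d : DihedralGroup 4) (x : Zc n) :
    signAction n d x = .ofAdd (((dihedralSign d : ℤ) : ZMod n) * x.toAdd) := rfl

/-- The semidirect product of the cyclic group of order `n` by the dihedral group of order `8`
acting by signs. -/
abbrev CyclicDihedral (n : ℕ) := Zc n ⋊[signAction n] DihedralGroup 4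

namespace CyclicDihedral

variable {n : ℕ}

theorem hom_ext {M : Type*} [Group M] {f g : CyclicDihedral n →* M}
    (hn : f (.inl (.ofAdd 1)) = g (.inl (.ofAdd 1)))
    (hs : f (.inr (.sr 0)) = g (.inr (.sr 0)))
    (hr : f (.inr (.r 1)) = g (.inr (.r 1))) : f = g := by
  apply SemidirectProduct.hom_ext
  · refine MonoidHom.ext fun x => ?_
    obtain ⟨k, rfl⟩ := zmod_eq_ofAdd_one_zpow x
    simp [hn]
  · refine MonoidHom.ext fun d => ?_
    have hr' (i : ZMod 4) : (DihedralGroup.r i) = DihedralGroup.r 1 ^ i.val := by simp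
    rcases d with i | i
    · rw [hr']
      simp only [map_pow, MonoidHom.comp_apply, hr]
    · have : DihedralGroup.sr i = DihedralGroup.sr 0 * DihedralGroup.r i := by simp
      rw [this, hr']
      simp only [map_pow, map_mul, MonoidHom.comp_apply, hr, hs]

/-- The endomorphism of `CyclicDihedral n` that multiplies the cyclic part by `u`, twists it by
the multiple by `k` of the parity cocycle, and acts by `dihedralEnd p` on the dihedral part. -/
def endo (k : Zc n) (u : (ZMod n)ˣ) (p : Zc 2 × Zc 2) : Monoid.End (CyclicDihedral n) where
  toFun x := ⟨.ofAdd (u * x.left.toAdd + k.toAdd * dihedralParity x.right),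
    dihedralEnd p x.right⟩
  map_one' := by
    have : dihedralParity 1 = 0 := by decide
    ext <;> simp [this]
  map_mul' x y := by
    ext
    · apply Multiplicative.toAdd.injective
      simp only [SemidirectProduct.mul_left, SemidirectProduct.mul_right, signAction_apply,
        dihedralParity_mul, dihedralSign_dihedralEnd, toAdd_mul, toAdd_ofAdd]
      push_cast
      ring_nf
    · simp

theorem endo_apply (k : Zc n) (u : (ZMod n)ˣ) (p : Zc 2 × Zc 2) (x : CyclicDihedral n) :
    endo k u p x = ⟨.ofAdd (u * x.left.toAdd + k.toAdd * dihedralParity x.right),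
    dihedralEnd p x.right⟩ := rfl

/-- The group acting on `CyclicDihedral n`, for `n ∣ m`. -/
abbrev AutModel {m : ℕ} (h : n ∣ m) :=
  (Zc n ⋊[((unitAction n).comp (ZMod.unitsMap h)).comp (MonoidHom.snd (Zc 2) (ZMod m)ˣ)]
    (Zc 2 × (ZMod m)ˣ)) ⋊[(1 : Zc 2 →* _)] Zc 2

/-- The representation of `AutModel h` by endomorphisms of `CyclicDihedral n`. -/
def endHom {m : ℕ} (h : n ∣ m) : AutModel h →* Monoid.End (CyclicDihedral n) where
  toFun x := endo x.left.left (ZMod.unitsMap h x.left.right.2) (x.left.right.1, x.right)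
  map_one' := by
    ext x
    · simp [endo_apply]
    · simp only [endo_apply]
      exact DFunLike.congr_fun (map_one dihedralEnd) x.right
  map_mul' x y := by
    ext z
    · apply Multiplicative.toAdd.injective
      simp [endo_apply, unitAction_apply, dihedralParity_dihedralEnd]
      ring_nf
    · exact DFunLike.congr_fun
        (map_mul dihedralEnd (x.left.right.1, x.right) (y.left.right.1, y.right)) z.right

/-- The representation of `AutModel h` by automorphisms of `CyclicDihedral n`. -/
def autHom {m : ℕ} (h : n ∣ m) : AutModel h →* MulAut (CyclicDihedral n) where
  toFun x := (endHom h x).toMulEquiv (endHom h x⁻¹)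
    (by change endHom h x⁻¹ * endHom h x = 1; rw [← map_mul]; simp)
    (by change endHom h x * endHom h x⁻¹ = 1; rw [← map_mul]; simp)
  map_one' := by
    ext1 z
    exact DFunLike.congr_fun (map_one (endHom h)) z
  map_mul' x y := by
    ext1 z
    exact DFunLike.congr_fun (map_mul (endHom h) x y) z

theorem autHom_apply {m : ℕ} (h : n ∣ m) (x : AutModel h) (z : CyclicDihedral n) :
    autHom h x z = endo x.left.left (ZMod.unitsMap h x.left.right.2)
      (x.left.right.1, x.right) z := rfl

theorem autHom_injective {m : ℕ} (h : n ∣ m) (hu : Function.Injective (ZMod.unitsMap h)) :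
    Function.Injective (autHom h) := by
  intro x y hxy
  have key (z : CyclicDihedral n) := DFunLike.congr_fun hxy z
  simp only [autHom_apply, endo_apply, SemidirectProduct.ext_iff] at key
  have hend : ∀ p p' : Zc 2 × Zc 2, dihedralEnd p (.sr 0) = dihedralEnd p' (.sr 0) →
      dihedralEnd p (.r 1) = dihedralEnd p' (.r 1) → p = p' := by decide
  have hp := hend _ _ (key (.inr (.sr 0))).2 (key (.inr (.r 1))).2
  have hpar : dihedralParity (.r 1) = 1 := by decide
  have hpar' : dihedralParity 1 = 0 := by decide
  have hk := (key (.inr (.r 1))).1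
  have hn := (key (.inl (.ofAdd 1))).1
  simp [hpar, hpar'] at hk hn
  rw [Prod.mk.injEq] at hp
  exact SemidirectProduct.ext (SemidirectProduct.ext hk
    (Prod.ext hp.1 (hu (Units.ext hn)))) hp.2

theorem map_inl_ofAdd {f : CyclicDihedral n →* CyclicDihedral n} {a : ZMod n}
    (ha : f (.inl (.ofAdd 1)) = .inl (.ofAdd a)) (k : ZMod n) :
    f (.inl (.ofAdd k)) = .inl (.ofAdd (k * a)) := by
  obtain ⟨k, rfl⟩ := ZMod.intCast_surjective k
  rw [← zsmul_one k, ofAdd_zsmul, map_zpow, map_zpow, ha, ← map_zpow, ← ofAdd_zsmul]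
  simp

theorem right_map_inl (hn : Odd n) (f : CyclicDihedral n →* CyclicDihedral n) (x : Zc n) :
    (f (.inl x)).right = 1 := by
  have h4 : ∀ d : DihedralGroup 4, d ^ 4 = 1 := by decide
  have hx : x ^ n = 1 := by
    apply Multiplicative.toAdd.injective
    simp
  have hd : (f (.inl x)).right ^ n = 1 := by
    rw [← SemidirectProduct.rightHom_eq_right, ← map_pow, ← map_pow, ← map_pow, hx]
    simp
  have hcop : Nat.Coprime n 4 := by
    rw [show 4 = 2 ^ 2 by rfl]
    exact (Nat.coprime_two_right.mpr hn).pow_right 2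
  rw [← orderOf_eq_one_iff, ← Nat.dvd_one, ← hcop]
  exact Nat.dvd_gcd (orderOf_dvd_of_pow_eq_one hd) (orderOf_dvd_of_pow_eq_one (h4 _))

theorem exists_unit_map_inl (hn : Odd n) (f : MulAut (CyclicDihedral n)) :
    ∃ u : (ZMod n)ˣ, f (.inl (.ofAdd 1)) = .inl (.ofAdd (u : ZMod n)) := by
  have key (g : MulAut (CyclicDihedral n)) :
      ∃ a : ZMod n, g (.inl (.ofAdd 1)) = .inl (.ofAdd a) :=
    ⟨(g (.inl (.ofAdd 1))).left.toAdd,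
      SemidirectProduct.ext rfl (right_map_inl hn g.toMonoidHom _)⟩
  obtain ⟨a, ha⟩ := key f
  obtain ⟨b, hb⟩ := key f.symm
  have hba : b * a = 1 := by
    have := map_inl_ofAdd (f := f.toMonoidHom) ha b
    rw [← hb] at this
    simpa using this.symm
  exact ⟨⟨a, b, by rw [mul_comm, hba], hba⟩, ha⟩

theorem dihedralSign_right_map_inr (hn : Odd n) (hn1 : 1 < n) (f : MulAut (CyclicDihedral n))
    (d : DihedralGroup 4) : dihedralSign (f (.inr d)).right = dihedralSign d := by
  obtain ⟨u, hu⟩ := exists_unit_map_inl hn f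
  have hcomm : (.inr d * .inl (.ofAdd 1) : CyclicDihedral n) =
      .inl (.ofAdd ((dihedralSign d : ℤ) : ZMod n)) * .inr d := by
    ext <;> simp [signAction_apply]
  have h := congrArg f hcomm
  have hd := map_inl_ofAdd (f := f.toMonoidHom) hu ((dihedralSign d : ℤ) : ZMod n)
  simp only [MulEquiv.toMonoidHom_eq_coe, MonoidHom.coe_coe] at hd
  rw [map_mul, map_mul, hu, hd] at h
  have hl := congrArg (fun z => z.left.toAdd) h
  simp only [SemidirectProduct.mul_left, SemidirectProduct.left_inl, SemidirectProduct.right_inl,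
    signAction_apply, toAdd_mul, toAdd_ofAdd, map_one, MulAut.one_apply] at hl
  rw [add_comm, add_left_inj, Units.mul_left_inj] at hl
  have h2 : (2 : ZMod n) ≠ 0 := by
    intro h
    have : n ∣ 2 := (ZMod.natCast_eq_zero_iff 2 n).mp (by exact_mod_cast h)
    have := Nat.le_of_dvd two_pos this
    obtain ⟨k, hk⟩ := hn
    omega
  rcases Int.units_eq_one_or (dihedralSign (f (.inr d)).right) with h1 | h1 <;>
  rcases Int.units_eq_one_or (dihedralSign d) with h1' | h1' <;> rw [h1, h1'] <;>
  rw [h1, h1'] at hl <;> push_cast at hl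
  · exact absurd (by linear_combination hl) h2
  · exact absurd (by linear_combination -hl) h2

theorem exists_map_sr_zero (hn : Odd n) (hn1 : 1 < n) (f : MulAut (CyclicDihedral n)) :
    ∃ i : Zc 2, ∀ j : Zc 2, f (.inr (.sr 0)) = .inr (dihedralEnd (i, j) (.sr 0)) := by
  have hsign := dihedralSign_right_map_inr hn hn1 f (.sr 0)
  rw [show dihedralSign (.sr 0) = 1 by decide] at hsign
  have hleft : (f (.inr (.sr 0))).left = 1 := by
    have hsq : f (.inr (.sr 0)) * f (.inr (.sr 0)) = 1 := by
      rw [← map_mul, ← map_mul, DihedralGroup.sr_mul_self]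
      simp
    have h := congrArg (fun z => z.left.toAdd) hsq
    simp only [SemidirectProduct.mul_left, signAction_apply, hsign, toAdd_mul, toAdd_ofAdd,
      SemidirectProduct.one_left, toAdd_one] at h
    have h2 : IsUnit (2 : ZMod n) :=
      (ZMod.isUnit_iff_coprime 2 n).mpr (Nat.coprime_two_left.mpr hn)
    apply Multiplicative.toAdd.injective
    apply h2.mul_right_injective
    push_cast [toAdd_one] at h ⊢
    linear_combination h
  have hne1 : (f (.inr (.sr 0))).right ≠ 1 := by
    intro h
    have h1 : f (.inr (.sr 0)) = 1 := SemidirectProduct.ext hleft h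
    rw [map_eq_one_iff f f.injective, ← map_one SemidirectProduct.inr,
      SemidirectProduct.inr_inj] at h1
    exact absurd h1 (by decide)
  have hne2 : (f (.inr (.sr 0))).right ≠ .r 2 := by
    intro h
    have h1 : f (.inr (.sr 0)) = .inr (.r 2) := SemidirectProduct.ext hleft h
    have hcentral (z : CyclicDihedral n) : .inr (.r 2) * z = z * .inr (.r 2) := by
      have hs : dihedralSign (.r 2) = 1 := by decide
      have hr : ∀ d : DihedralGroup 4, .r 2 * d = d * .r 2 := by decide
      ext
      · simp [signAction_apply, hs]
      · exact hr _
    have h2 := hcentral (f (.inr (.r 1)))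
    rw [← h1, ← map_mul f, ← map_mul f, f.injective.eq_iff, ← map_mul, ← map_mul,
      SemidirectProduct.inr_inj] at h2
    exact absurd h2 (by decide)
  have hfin : ∀ d : DihedralGroup 4, dihedralSign d = 1 → d ≠ 1 → d ≠ .r 2 →
      ∃ i : Zc 2, ∀ j : Zc 2, d = dihedralEnd (i, j) (.sr 0) := by decide
  obtain ⟨i, hi⟩ := hfin _ hsign hne1 hne2
  exact ⟨i, fun j => SemidirectProduct.ext hleft (hi j)⟩

theorem exists_right_map_r_one (hn : Odd n) (hn1 : 1 < n) (f : MulAut (CyclicDihedral n)) :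
    ∃ j : Zc 2, ∀ i : Zc 2, (f (.inr (.r 1))).right = dihedralEnd (i, j) (.r 1) := by
  have hsign := dihedralSign_right_map_inr hn hn1 f (.r 1)
  rw [show dihedralSign (.r 1) = -1 by decide] at hsign
  have hsq : (f (.inr (.r 1))).right * (f (.inr (.r 1))).right ≠ 1 := by
    intro h
    have h1 : f (.inr (.r 1)) * f (.inr (.r 1)) = 1 := by
      refine SemidirectProduct.ext ?_ h
      apply Multiplicative.toAdd.injective
      simp [signAction_apply, hsign]
    rw [← map_mul, map_eq_one_iff f f.injective, ← map_mul, ← map_one SemidirectProduct.inr,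
      SemidirectProduct.inr_inj] at h1
    exact absurd h1 (by decide)
  have hfin : ∀ d : DihedralGroup 4, dihedralSign d = -1 → d * d ≠ 1 →
      ∃ j : Zc 2, ∀ i : Zc 2, d = dihedralEnd (i, j) (.r 1) := by decide
  exact hfin _ hsign hsq

theorem autHom_surjective {m : ℕ} (hn : Odd n) (hn1 : 1 < n) (h : n ∣ m)
    (hu : Function.Surjective (ZMod.unitsMap h)) : Function.Surjective (autHom h) := by
  intro f
  obtain ⟨u, hfu⟩ := exists_unit_map_inl hn f
  obtain ⟨v, rfl⟩ := hu u
  obtain ⟨i, hi⟩ := exists_map_sr_zero hn hn1 f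
  obtain ⟨j, hj⟩ := exists_right_map_r_one hn hn1 f
  refine ⟨⟨⟨(f (.inr (.r 1))).left, (i, v)⟩, j⟩, MulEquiv.toMonoidHom_injective ?_⟩
  have hpar : dihedralParity (.r 1) = 1 := by decide
  have hpar' : dihedralParity 1 = 0 := by decide
  have hpar'' : dihedralParity (.sr 0) = 0 := by decide
  apply hom_ext <;> simp only [MulEquiv.toMonoidHom_eq_coe, MonoidHom.coe_coe, autHom_apply]
  · rw [hfu]
    ext <;> simp [endo_apply, hpar']
  · rw [hi j]
    ext <;> simp [endo_apply, hpar'']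
  · ext
    · simp [endo_apply, hpar]
    · simp [endo_apply, hj i]

end CyclicDihedral

theorem exists_zmod_hom {M : Type*} [Group M] {n : ℕ} {x : M} (hx : x ^ n = 1) :
    ∃ f : Zc n →* M, f (.ofAdd 1) = x := by
  let g : ZMod n →+ Additive M := ZMod.lift n ⟨zmultiplesHom _ (Additive.ofMul x), by
    rw [zmultiplesHom_apply, natCast_zsmul, ← ofMul_pow, hx, ofMul_one]⟩
  refine ⟨AddMonoidHom.toMultiplicativeLeft g, ?_⟩
  have : g ((1 : ℤ) : ZMod n) = Additive.ofMul x := by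
    rw [ZMod.lift_coe]
    simp
  rw [Int.cast_one] at this
  exact this

theorem exists_dihedral_hom {M : Type*} [Group M] {n : ℕ} {z b : M} (hz : z * z = 1)
    (hb : b ^ n = 1) (hbz : b * z = z * b⁻¹) :
    ∃ f : DihedralGroup n →* M, f (.sr 0) = z ∧ f (.r 1) = b := by
  obtain ⟨g, rfl⟩ := exists_zmod_hom hb
  have hg (y : Zc n) : g y * z = z * (g y)⁻¹ := by
    obtain ⟨k, rfl⟩ := zmod_eq_ofAdd_one_zpow y
    have : SemiconjBy z (g (.ofAdd 1))⁻¹ (g (.ofAdd 1)) := hbz.symm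
    simpa using (this.zpow_right k).eq.symm
  have hg' (y : Zc n) (w : M) : g y * (z * w) = z * ((g y)⁻¹ * w) := by
    rw [← mul_assoc, hg, mul_assoc]
  have hz' (w : M) : z * (z * w) = w := by rw [← mul_assoc, hz, one_mul]
  refine ⟨{ toFun
              | .r i => g (.ofAdd i)
              | .sr i => z * g (.ofAdd i)
            map_one' := map_one g
            map_mul' := ?_ }, ?_, rfl⟩
  · rintro (i | i) (j | j)
    · simp
    · simp [hg', sub_eq_neg_add]
    · simp [mul_assoc]
    · simp [mul_assoc, hg', hz', sub_eq_neg_add]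
  · change z * g (.ofAdd 0) = z
    simp

namespace CyclicDihedral

variable {n : ℕ}

theorem exists_hom {M : Type*} [Group M] {x z b : M} (hx : x ^ n = 1) (hz : z * z = 1)
    (hb : b ^ 4 = 1) (hbz : b * z = z * b⁻¹) (hzx : z * x = x * z) (hbx : b * x = x⁻¹ * b) :
    ∃ f : CyclicDihedral n →* M, f (.inl (.ofAdd 1)) = x ∧ f (.inr (.sr 0)) = z ∧
      f (.inr (.r 1)) = b := by
  obtain ⟨fn, rfl⟩ := exists_zmod_hom hx
  obtain ⟨fd, rfl, rfl⟩ := exists_dihedral_hom hz hb hbz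
  have hmul (d e : DihedralGroup 4)
      (hd : ∀ y, fn (signAction n d y) = fd d * fn y * (fd d)⁻¹)
      (he : ∀ y, fn (signAction n e y) = fd e * fn y * (fd e)⁻¹) (y : Zc n) :
      fn (signAction n (d * e) y) = fd (d * e) * fn y * (fd (d * e))⁻¹ := by
    rw [map_mul, MulAut.mul_apply, hd, he, map_mul]
    group
  have hr1 (y : Zc n) : fn (signAction n (.r 1) y) = fd (.r 1) * fn y * (fd (.r 1))⁻¹ := by
    have hact : signAction n (.r 1) y = y⁻¹ := by
      rw [signAction_apply, show dihedralSign (.r 1) = -1 by decide]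
      simp
    obtain ⟨k, rfl⟩ := zmod_eq_ofAdd_one_zpow y
    have := SemiconjBy.zpow_right hbx k
    rw [hact, eq_mul_inv_iff_mul_eq]
    simpa using this.eq.symm
  have hsr0 (y : Zc n) : fn (signAction n (.sr 0) y) = fd (.sr 0) * fn y * (fd (.sr 0))⁻¹ := by
    have hact : signAction n (.sr 0) y = y := by
      rw [signAction_apply, show dihedralSign (.sr 0) = 1 by decide]
      simp
    obtain ⟨k, rfl⟩ := zmod_eq_ofAdd_one_zpow y
    have := SemiconjBy.zpow_right hzx k
    rw [hact, eq_mul_inv_iff_mul_eq]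
    simpa using this.eq.symm
  have hr (k : ℕ) (y : Zc n) :
      fn (signAction n (.r 1 ^ k) y) = fd (.r 1 ^ k) * fn y * (fd (.r 1 ^ k))⁻¹ := by
    induction k generalizing y with
    | zero => simp
    | succ k ih => rw [pow_succ]; exact hmul _ _ ih hr1 y
  have hall (d : DihedralGroup 4) (y : Zc n) :
      fn (signAction n d y) = fd d * fn y * (fd d)⁻¹ := by
    rcases d with i | i
    · have : DihedralGroup.r i = DihedralGroup.r 1 ^ i.val := by simp
      rw [this]
      exact hr _ _
    · have : DihedralGroup.sr i = DihedralGroup.sr 0 * DihedralGroup.r 1 ^ i.val := by simp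
      rw [this]
      exact hmul _ _ hsr0 (hr _) y
  refine ⟨SemidirectProduct.lift fn fd fun d => MonoidHom.ext fun y => hall d y, ?_, ?_, ?_⟩ <;>
  simp

end CyclicDihedral

/-- For `m = 2 * q` with `q` odd and `t ≡ s ≡ -1`, the group `G(m,t,s)` is the semidirect product
of the cyclic group of order `q` by the dihedral group of order `8`. -/
theorem nonempty_zsGroup_mulEquiv {m q : ℕ} {t s : ℤ} (hq : Odd q) (hm : m = 2 * q)
    (ht : (m : ℤ) ∣ 2 * t + 2) (hs : (m : ℤ) ∣ 2 * s + 2) :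
    Nonempty (ZSGroup m t s ≃* CyclicDihedral q) := by
  subst hm
  have zpow_eq_one {M : Type} [Group M] {a : M} (ha : a ^ (2 * q) = 1) {k : ℤ}
      (hk : ((2 * q : ℕ) : ℤ) ∣ k) : a ^ k = 1 := by
    obtain ⟨l, rfl⟩ := hk
    rw [zpow_mul, zpow_natCast, ha, one_zpow]
  have ht' {M : Type} [Group M] {a : M} (ha : a ^ (2 * q) = 1) : a ^ (2 * t + 1) = a⁻¹ := by
    rw [← mul_eq_one_iff_eq_inv, ← zpow_add_one]
    exact zpow_eq_one ha (by convert ht using 1; ring)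
  have hs' {M : Type} [Group M] {a : M} (ha : a ^ (2 * q) = 1) : a ^ (2 * s) = (a ^ 2)⁻¹ := by
    rw [← mul_eq_one_iff_eq_inv, ← zpow_natCast, ← zpow_add]
    exact zpow_eq_one ha (by exact_mod_cast hs)
  obtain ⟨c, hc⟩ := hq
  have pow_q {M : Type} [Group M] (a : M) : a ^ q = (a ^ 2) ^ c * a := by
    rw [← pow_mul, ← pow_succ, ← hc]
  have pow_q_succ {M : Type} [Group M] (a : M) : a ^ (q + 1) = (a ^ 2) ^ (c + 1) := by
    rw [← pow_mul, hc]
    rfl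
  let A : CyclicDihedral q := .inl (.ofAdd 1) * .inr (.sr 0)
  let B : CyclicDihedral q := .inr (.r 1)
  have sign_sr : dihedralSign (.sr 0) = 1 := by decide
  have sign_sr' : dihedralSign (.sr 1) = -1 := by decide
  have sign_r : dihedralSign (.r 1) = -1 := by decide
  have A_sq : A ^ 2 = .inl (.ofAdd 2) := by
    rw [sq]
    ext
    · apply Multiplicative.toAdd.injective
      simp [A, signAction_apply, sign_sr]
      norm_num
    · simp [A]
  have A_sq_pow (k : ℕ) : (A ^ 2) ^ k = .inl (.ofAdd ((2 * k : ℕ) : ZMod q)) := by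
    rw [A_sq, ← map_pow, ← ofAdd_nsmul, nsmul_eq_mul, mul_comm]
    simp
  have A_pow : A ^ (2 * q) = 1 := by
    rw [pow_mul, A_sq_pow]
    simp
  have rels : ∀ r ∈ zsRels (2 * q) t s, FreeGroup.lift ![A, B] r = 1 := by
    rintro r (rfl | rfl | rfl | rfl)
    · simpa using A_pow
    · have : (DihedralGroup.r 1 : DihedralGroup 4) ^ 4 = 1 := by decide
      rw [map_pow, FreeGroup.lift_apply_of]
      simp only [Matrix.cons_val_one, Matrix.cons_val_zero, B]
      rw [← map_pow, this, map_one]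
    · have : A * B * A = B ^ 3 := by
        have h3 : (DihedralGroup.sr 0 * .r 1 * .sr 0 : DihedralGroup 4) = .r 1 ^ 3 := by decide
        simp only [A, B, ← map_pow]
        ext
        · apply Multiplicative.toAdd.injective
          simp [signAction_apply, sign_sr, sign_sr']
        · simpa using h3
      simp only [map_mul, map_inv, map_pow, map_zpow, FreeGroup.lift_apply_of, Matrix.cons_val_zero,
        Matrix.cons_val_one, ht' A_pow, mul_inv_eq_one]
      rw [eq_mul_inv_iff_mul_eq, this]
    · have : A ^ 2 * B * A ^ 2 = B := by
        rw [A_sq]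
        simp only [B]
        ext
        · apply Multiplicative.toAdd.injective
          simp [signAction_apply, sign_r]
        · simp
      simp only [map_mul, map_inv, map_pow, map_zpow, FreeGroup.lift_apply_of, Matrix.cons_val_zero,
        Matrix.cons_val_one, hs' A_pow, mul_inv_eq_one]
      rw [eq_mul_inv_iff_mul_eq, this]
  let F : ZSGroup (2 * q) t s →* CyclicDihedral q := PresentedGroup.toGroup rels
  let a : ZSGroup (2 * q) t s := PresentedGroup.of 0
  let b : ZSGroup (2 * q) t s := PresentedGroup.of 1
  have Fa : F a = A := PresentedGroup.toGroup.of rels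
  have Fb : F b = B := PresentedGroup.toGroup.of rels
  have ha : a ^ (2 * q) = 1 :=
    PresentedGroup.one_of_mem (rels := zsRels (2 * q) t s) (by simp [zsRels])
  have hb : b ^ 4 = 1 :=
    PresentedGroup.one_of_mem (rels := zsRels (2 * q) t s) (x := FreeGroup.of 1 ^ 4)
      (by simp [zsRels])
  have hab : a * b = b ^ 3 * a ^ (2 * t + 1) :=
    PresentedGroup.mk_eq_mk_of_mul_inv_mem (rels := zsRels (2 * q) t s)
      (x := FreeGroup.of 0 * FreeGroup.of 1)
      (y := FreeGroup.of 1 ^ 3 * FreeGroup.of 0 ^ (2 * t + 1)) (by simp [zsRels])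
  have haab : a ^ 2 * b = b * a ^ (2 * s) :=
    PresentedGroup.mk_eq_mk_of_mul_inv_mem (rels := zsRels (2 * q) t s)
      (x := FreeGroup.of 0 ^ 2 * FreeGroup.of 1)
      (y := FreeGroup.of 1 * FreeGroup.of 0 ^ (2 * s)) (by simp [zsRels])
  rw [ht' ha, eq_mul_inv_iff_mul_eq] at hab
  rw [hs' ha, eq_mul_inv_iff_mul_eq] at haab
  have hb3 : b ^ 3 = b⁻¹ := by rw [← mul_eq_one_iff_eq_inv, ← pow_succ, hb]
  have hsemi : SemiconjBy b (a ^ 2) (a ^ 2)⁻¹ := by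
    rw [SemiconjBy, eq_inv_mul_iff_mul_eq, ← mul_assoc, haab]
  have hzz : a ^ q * a ^ q = 1 := by rw [← pow_add, ← two_mul, ha]
  obtain ⟨g, gx, gz, gb⟩ := CyclicDihedral.exists_hom (n := q) (x := a ^ (q + 1)) (z := a ^ q)
    (b := b) (by
      rw [pow_q_succ, pow_right_comm, ← pow_mul a 2 q, ha, one_pow])
    hzz hb
    (by
      have hba : b * a = a⁻¹ * b⁻¹ := by rw [eq_inv_mul_iff_mul_eq, ← mul_assoc, hab, hb3]
      rw [show a ^ q * b⁻¹ = (a ^ q)⁻¹ * b⁻¹ by rw [inv_eq_of_mul_eq_one_right hzz], pow_q,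
        ← mul_assoc, (hsemi.pow_right c).eq, mul_assoc, hba]
      group)
    (by rw [← pow_add, ← pow_add, add_comm])
    (by
      rw [pow_q_succ, (hsemi.pow_right (c + 1)).eq, inv_pow])
  refine ⟨MonoidHom.toMulEquiv F g ?_ ?_⟩
  · refine PresentedGroup.ext fun i => ?_
    fin_cases i
    · change g (F a) = a
      rw [Fa, map_mul, gx, gz, ← pow_add, show q + 1 + q = 2 * q + 1 by ring, pow_succ, ha, one_mul]
    · change g (F b) = b
      rw [Fb, gb]
  · apply CyclicDihedral.hom_ext
    · rw [MonoidHom.comp_apply, gx, map_pow, Fa, pow_q_succ, A_sq_pow,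
        show 2 * (c + 1) = q + 1 by omega]
      simp
    · rw [MonoidHom.comp_apply, gz, map_pow, Fa]
      rw [pow_q, A_sq_pow, ← mul_assoc, ← map_mul, ← ofAdd_add, ← Nat.cast_succ,
        Nat.succ_eq_add_one, ← hc]
      simp
    · rw [MonoidHom.comp_apply, gb, Fb]
      rfl

theorem unitsMap_two_mul_bijective {q : ℕ} (hq : Odd q) :
    Function.Bijective (ZMod.unitsMap (dvd_mul_left q 2)) := by
  have : NeZero q := ⟨hq.pos.ne'⟩
  refine (ZMod.unitsMap_surjective _).bijective_of_nat_card_le ?_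
  rw [Nat.card_eq_fintype_card, Nat.card_eq_fintype_card, ZMod.card_units_eq_totient,
    ZMod.card_units_eq_totient, Nat.totient_two_mul_of_odd hq]

/-- Let `G = G(m,t,s)` with `m = 2q`, `q > 1` odd, and `gcd(t,m) = 1`.
Then `Aut(G) ≅ (ℤ_{m/2} ⋊ (ℤ₂ × U(m))) ⋊ ℤ₂`. -/
theorem zs4m_aut_two_q (m q : ℕ) (t s : ℤ) (hq1 : 1 < q) (hqodd : Odd q) (hm : m = 2 * q)
    (hs0 : 0 ≤ s) (hsm : s < m)
    (hG1 : 2 * s ^ 2 ≡ 2 [ZMOD (m : ℤ)])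
    (hG2 : 4 * t * (s + 1) ≡ 0 [ZMOD (m : ℤ)])
    (hG3 : 2 * (t + 1) * (s - 1) ≡ 0 [ZMOD (m : ℤ)])
    (hG4 : Int.gcd s ((m : ℤ) / 2) = 1)
    (htm : Int.gcd t (m : ℤ) = 1) :
    ∃ (φ : Zc 2 × (ZMod m)ˣ →* MulAut (Zc (m / 2)))
      (ψ : Zc 2 →* MulAut (Zc (m / 2) ⋊[φ] (Zc 2 × (ZMod m)ˣ))),
      Nonempty (MulAut (ZSGroup m t s) ≃*
        (Zc (m / 2) ⋊[φ] (Zc 2 × (ZMod m)ˣ)) ⋊[ψ] Zc 2) := by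
  subst hm
  have hq2 : IsCoprime (q : ℤ) 2 := by
    rw [Int.isCoprime_iff_gcd_eq_one]
    exact_mod_cast Nat.coprime_two_right.mpr hqodd
  push_cast at hG2 hG3 htm
  rw [← Int.isCoprime_iff_gcd_eq_one] at htm
  have hs : (q : ℤ) ∣ s + 1 := by
    have h : (q : ℤ) ∣ 2 * (2 * t) * (s + 1) := by
      have := (dvd_mul_left (q : ℤ) 2).trans (Int.modEq_zero_iff_dvd.mp hG2)
      rwa [show 2 * (2 * t) * (s + 1) = 4 * t * (s + 1) by ring]
    exact (hq2.mul_right (hq2.mul_right htm.symm.of_mul_left_right)).dvd_of_dvd_mul_left h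
  have ht : (q : ℤ) ∣ t + 1 := by
    have h : (q : ℤ) ∣ 2 * 2 * (t + 1) := by
      have h3 := (dvd_mul_left (q : ℤ) 2).trans (Int.modEq_zero_iff_dvd.mp hG3)
      have h4 := dvd_sub (hs.mul_left (2 * (t + 1))) h3
      rwa [show 2 * (t + 1) * (s + 1) - 2 * (t + 1) * (s - 1) = 2 * 2 * (t + 1) by ring] at h4
    exact (hq2.mul_right hq2).dvd_of_dvd_mul_left h
  obtain ⟨e⟩ := nonempty_zsGroup_mulEquiv (m := 2 * q) (t := t) (s := s) hqodd rfl
    (by push_cast; simpa [mul_add] using mul_dvd_mul_left 2 ht)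
    (by push_cast; simpa [mul_add] using mul_dvd_mul_left 2 hs)
  rw [Nat.mul_div_cancel_left q two_pos]
  have hu := unitsMap_two_mul_bijective hqodd
  exact ⟨_, 1, ⟨(MulAut.congr e).trans (MulEquiv.ofBijective
    (CyclicDihedral.autHom (dvd_mul_left q 2))
    ⟨CyclicDihedral.autHom_injective _ hu.injective,
      CyclicDihedral.autHom_surjective hqodd hq1 _ hu.surjective⟩).symm⟩⟩
end

section
/- Let G = G(m,t,s) with m = 8q where q > 1 is odd, t odd, and gcd(t, m) = d. If 2t(s+1) ≡ 0 (mod m), then there exist homomorphisms making Aut(G) ≅ (ℤ_{m/(2d)} ⋊ (ℤ₂ × U(m))) ⋊ ℤ₂; if 2t(s+1) ≢ 0 (mod m), then there exists a homomorphism making Aut(G) ≅ ℤ_{m/(2d)} ⋊ (ℤ₂ × U(m)). -/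
/-- An action of `Zc n` on a group by powers of an element of exponent `n`. -/
theorem exists_zc_hom_zpow {M : Type*} [Group M] (n : ℕ) (τ : M) (h : τ ^ n = 1) :
    ∃ f : Zc n →* M, ∀ k : ℤ, f (Multiplicative.ofAdd (k : ZMod n)) = τ ^ k := by
  have h0 : (zmultiplesHom (Additive M)) (Additive.ofMul τ) (n : ℤ) = 0 := by
    change Additive.ofMul (τ ^ (n : ℤ)) = Additive.ofMul 1
    rw [zpow_natCast, h]
  refine ⟨AddMonoidHom.toMultiplicativeLeft
    (ZMod.lift n ⟨(zmultiplesHom (Additive M)) (Additive.ofMul τ), h0⟩), fun k => ?_⟩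
  change Additive.toMul (ZMod.lift n ⟨(zmultiplesHom (Additive M)) (Additive.ofMul τ), h0⟩
    (k : ZMod n)) = _
  rw [ZMod.lift_coe]
  rfl

/-- If `f n * g h = 1` only trivially and `g` normalizes the range of `f`, then `f` and `g`
assemble to an injective homomorphism from a semidirect product. -/
theorem exists_semidirectProduct_injective {N H M : Type*} [Group N] [Group H] [Group M]
    (f : N →* M) (g : H →* M) (hinj : ∀ n h, f n * g h = 1 → n = 1 ∧ h = 1)
    (hconj : ∀ h n, ∃ n', f n' = g h * f n * (g h)⁻¹) :
    ∃ (φ : H →* MulAut N) (e : N ⋊[φ] H →* M), Function.Injective e ∧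
      ∀ n h, e ⟨n, h⟩ = f n * g h := by
  have hf : Function.Injective f := by
    rw [injective_iff_map_eq_one]
    intro n hn
    exact (hinj n 1 (by simp [hn])).1
  choose c hc using hconj
  let φ : H →* MulAut N :=
    { toFun := fun h =>
        { toFun := c h
          invFun := c h⁻¹
          left_inv := fun n => hf (by simp [hc, mul_assoc])
          right_inv := fun n => hf (by simp [hc, mul_assoc])
          map_mul' := fun x y => hf (by simp [hc, mul_assoc]) }
      map_one' := by ext n; exact hf (by simp [hc])
      map_mul' := fun x y => by ext n; exact hf (by simp [hc, mul_assoc]) }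
  have hφ : ∀ h n, φ h n = c h n := fun _ _ => rfl
  let e : N ⋊[φ] H →* M := SemidirectProduct.lift f g (fun h => by
    ext n
    simp [hφ, hc])
  have he : ∀ n h, e ⟨n, h⟩ = f n * g h := fun _ _ => rfl
  refine ⟨φ, e, ?_, he⟩
  rw [injective_iff_map_eq_one]
  rintro ⟨n, h⟩ hx
  obtain ⟨h1, h2⟩ := hinj n h hx
  subst h1 h2
  rfl

/-- A criterion for a homomorphism from `Zc n ⋊ (Zc 2 × U)` to be injective, in terms of the images
of generators. -/
theorem exists_semidirectProduct_of_generators {U M : Type*} [Group U] [Group M] (n : ℕ)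
    [NeZero n] (τ ρ : M) (σ : U →* M) (hτ : τ ^ n = 1) (hρ : ρ ^ 2 = 1)
    (hcomm : ∀ u, Commute ρ (σ u)) (hρτ : ∃ k : ℕ, SemiconjBy ρ τ (τ ^ k))
    (hστ : ∀ u, ∃ k : ℕ, SemiconjBy (σ u) τ (τ ^ k))
    (h0 : ∀ (k : ℕ) u, τ ^ k * σ u = 1 → n ∣ k ∧ u = 1)
    (h1 : ∀ (k : ℕ) u, τ ^ k * (ρ * σ u) ≠ 1) :
    ∃ (φ : Zc 2 × U →* MulAut (Zc n)) (e : Zc n ⋊[φ] (Zc 2 × U) →* M),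
      Function.Injective e ∧ τ ∈ e.range ∧ ρ ∈ e.range ∧ (∀ u, σ u ∈ e.range) ∧
      ∀ x, ∃ (k : ℕ) (u : U), e x = τ ^ k * σ u ∨ e x = τ ^ k * (ρ * σ u) := by
  obtain ⟨f, hf⟩ := exists_zc_hom_zpow n τ hτ
  obtain ⟨r, hr⟩ := exists_zc_hom_zpow 2 ρ hρ
  have hf' : ∀ x, ∃ k : ℕ, x = Multiplicative.ofAdd (k : ZMod n) ∧ f x = τ ^ k := by
    intro x
    have hx : x = Multiplicative.ofAdd ((ZMod.val x.toAdd : ℕ) : ZMod n) := by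
      rw [ZMod.natCast_zmod_val, ofAdd_toAdd]
    refine ⟨_, hx, ?_⟩
    conv_lhs => rw [hx]
    have := hf (ZMod.val x.toAdd)
    rwa [Int.cast_natCast, zpow_natCast] at this
  have hr0 : r 1 = 1 := map_one r
  have hr1 : r (Multiplicative.ofAdd 1) = ρ := by simpa using hr 1
  have hr' : ∀ x : Zc 2, x = 1 ∨ x = Multiplicative.ofAdd 1 := by
    intro x
    change (x.toAdd : ZMod 2) = 0 ∨ (x.toAdd : ZMod 2) = 1
    generalize (x.toAdd : ZMod 2) = y
    revert y
    decide
  have hc : ∀ x u, Commute (r x) (σ u) := by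
    intro x u
    rcases hr' x with rfl | rfl
    · rw [hr0]; exact Commute.one_left _
    · rw [hr1]; exact hcomm u
  let g : Zc 2 × U →* M := r.noncommCoprod σ hc
  have hg : ∀ x u, g (x, u) = r x * σ u := fun _ _ => rfl
  obtain ⟨φ, e, hinj, he⟩ := exists_semidirectProduct_injective f g (by
    rintro x ⟨y, u⟩ h
    obtain ⟨k, rfl, hk⟩ := hf' x
    rw [hk, hg] at h
    rcases hr' y with rfl | rfl
    · rw [hr0, one_mul] at h
      obtain ⟨hn, rfl⟩ := h0 k u h
      refine ⟨?_, rfl⟩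
      rw [(ZMod.natCast_eq_zero_iff k n).2 hn]
      rfl
    · rw [hr1] at h
      exact absurd h (h1 k u)) (by
    rintro ⟨y, u⟩ x
    obtain ⟨k, rfl, hk⟩ := hf' x
    have hy : ∃ l : ℕ, SemiconjBy (r y) τ (τ ^ l) := by
      rcases hr' y with rfl | rfl
      · exact ⟨1, by rw [hr0, pow_one]; exact SemiconjBy.one_left _⟩
      · rw [hr1]; exact hρτ
    obtain ⟨l, hl⟩ := hy
    obtain ⟨j, hj⟩ := hστ u
    have h2 : SemiconjBy (g (y, u)) (τ ^ k) (((τ ^ l) ^ j) ^ k) :=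
      ((hl.pow_right j).mul_left hj).pow_right k
    refine ⟨Multiplicative.ofAdd ((l * (j * k) : ℤ) : ZMod n), ?_⟩
    rw [hf, hk, h2.eq, mul_inv_cancel_right, ← pow_mul, ← pow_mul]
    exact_mod_cast rfl)
  refine ⟨φ, e, hinj, ⟨⟨Multiplicative.ofAdd (1 : ZMod n), 1⟩, ?_⟩,
    ⟨⟨1, (Multiplicative.ofAdd 1, 1)⟩, ?_⟩, fun u => ⟨⟨1, (1, u)⟩, ?_⟩, ?_⟩
  · rw [he, map_one g, mul_one]
    simpa using hf 1
  · rw [he, hg, hr1, map_one f, map_one σ, one_mul, mul_one]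
  · rw [he, hg, hr0, map_one f, one_mul, one_mul]
  · rintro ⟨x, y, u⟩
    obtain ⟨k, -, hk⟩ := hf' x
    refine ⟨k, u, ?_⟩
    rw [he, hg, hk]
    rcases hr' y with rfl | rfl
    · left; rw [hr0, one_mul]
    · right; rw [hr1]

/-- A group with the generators, normal form and universal property of `G(m,t,s)`. -/
structure ZSModel (m : ℕ) (t s : ℤ) (G : Type*) [Group G] where
  /-- powers of the first generator -/
  A : ZMod m → G
  /-- the second generator -/
  b : G
  /-- coordinates with respect to the normal form -/
  c : G → ZMod 4 × ZMod m
  add : ∀ x y, A (x + y) = A x * A y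
  b4 : b ^ 4 = 1
  even : ∀ k : ZMod m, A (2 * k) * b = b * A (2 * (s * k))
  odd : ∀ k : ZMod m, A (2 * k + 1) * b = b ^ 3 * A (2 * (s * k + t) + 1)
  coord : ∀ (i : ℕ) (x : ZMod m), c (b ^ i * A x) = ((i : ZMod 4), x)
  normal_form : ∀ g, ∃ i < 4, ∃ x, g = b ^ i * A x
  lift : ∀ X y : G, X ^ m = 1 → y ^ 4 = 1 → X * y = y ^ 3 * X ^ (2 * t + 1) →
    X ^ 2 * y = y * X ^ (2 * s) → ∃ φ : G →* G, φ (A 1) = X ∧ φ b = y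

/-- Left multiplication by the first generator on normal forms. -/
def zsPermA (m : ℕ) (c : ZMod 4 → ZMod m) : Equiv.Perm (ZMod 4 × ZMod m) where
  toFun p := (-p.1, p.2 + c p.1)
  invFun p := (-p.1, p.2 - c (-p.1))
  left_inv p := by simp
  right_inv p := by simp

/-- Left multiplication by the second generator on normal forms. -/
def zsPermB (m : ℕ) : Equiv.Perm (ZMod 4 × ZMod m) where
  toFun p := (p.1 + 1, p.2)
  invFun p := (p.1 - 1, p.2)
  left_inv p := by simp
  right_inv p := by simp

theorem zsPermA_sq_zpow (m : ℕ) (c : ZMod 4 → ZMod m) (k : ℤ) (p : ZMod 4 × ZMod m) :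
    ((zsPermA m c ^ 2) ^ k) p = (p.1, p.2 + k * (c p.1 + c (-p.1))) := by
  have h : ∀ p : ZMod 4 × ZMod m, (zsPermA m c ^ 2) p = (p.1, p.2 + (c p.1 + c (-p.1))) := by
    intro p
    simp [pow_two, zsPermA, add_assoc]
  induction k with
  | zero => simp
  | succ k ih =>
    rw [add_comm, zpow_one_add, Equiv.Perm.mul_apply, ih, h]
    ext <;> simp
    ring
  | pred k ih =>
    have : (zsPermA m c ^ 2) ^ (-(k : ℤ)) =
        (zsPermA m c ^ 2) * (zsPermA m c ^ 2) ^ (-(k : ℤ) - 1) := by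
      rw [← zpow_one_add]; congr 1; ring
    rw [this, Equiv.Perm.mul_apply, h] at ih
    have h1 := congrArg Prod.fst ih
    have h2 := congrArg Prod.snd ih
    simp only at h1 h2
    ext
    · exact h1
    · rw [h1] at h2
      simp only
      push_cast at h2 ⊢
      linear_combination h2

theorem zsPermB_pow (m k : ℕ) (p : ZMod 4 × ZMod m) :
    (zsPermB m ^ k) p = (p.1 + k, p.2) := by
  induction k with
  | zero => simp
  | succ k ih =>
    rw [pow_succ', Equiv.Perm.mul_apply, ih]
    simp [zsPermB, add_assoc]

theorem zsPermA_zpow_zero (m : ℕ) (c : ZMod 4 → ZMod m) (hc : c 0 = 1) (k : ℤ) :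
    (zsPermA m c ^ k) (0, 0) = (0, (k : ZMod m)) := by
  have h := fun k => zsPermA_sq_zpow m c k (0, 0)
  obtain ⟨l, rfl | rfl⟩ := Int.even_or_odd' k
  · rw [zpow_mul, zpow_ofNat, h]
    simp [hc]
    ring
  · rw [add_comm, zpow_one_add, zpow_mul, zpow_ofNat, Equiv.Perm.mul_apply, h]
    simp [hc, zsPermA]
    ring

theorem nonempty_zsModel (m q : ℕ) (t s : ℤ) (hm : m = 8 * q)
    (hG1 : (2 * s ^ 2 : ZMod m) = 2) (hG2 : (4 * t * (s + 1) : ZMod m) = 0)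
    (hG3 : (2 * (t + 1) * (s - 1) : ZMod m) = 0) : Nonempty (ZSModel m t s (ZSGroup m t s)) := by
  let c : ZMod 4 → ZMod m :=
    ![1, 2 * t + 1, 1 + 2 * t * (s + 1), 2 * t + 1 + 2 * t * (s + 1)]
  let e : ZMod 4 → ZMod m := ![2, 2 * s, 2, 2 * s]
  have hc : c 0 = 1 := rfl
  have he : ∀ i, c i + c (-i) = e i := by
    intro i
    fin_cases i
    · change (1 : ZMod m) + 1 = 2
      ring
    · change (2 * t + 1 : ZMod m) + (2 * t + 1 + 2 * t * (s + 1)) = 2 * s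
      linear_combination -hG3 + hG2
    · change (1 + 2 * t * (s + 1) : ZMod m) + (1 + 2 * t * (s + 1)) = 2
      linear_combination hG2
    · change (2 * t + 1 + 2 * t * (s + 1) : ZMod m) + (2 * t + 1) = 2 * s
      linear_combination -hG3 + hG2
  have hA := zsPermA_sq_zpow m c
  simp only [he] at hA
  have h8 : (8 * q : ZMod m) = 0 := by
    have : ((8 * q : ℕ) : ZMod m) = 0 := by rw [← hm]; simp
    exact_mod_cast this
  let F : Fin 2 → Equiv.Perm (ZMod 4 × ZMod m) := ![zsPermA m c, zsPermB m]
  have hF : ∀ r ∈ zsRels m t s, FreeGroup.lift F r = 1 := by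
    rintro r (rfl | rfl | rfl | rfl)
    · simp only [map_pow, FreeGroup.lift_apply_of]
      change zsPermA m c ^ m = 1
      have : m = 2 * (4 * q) := by omega
      rw [show zsPermA m c ^ m = (zsPermA m c ^ 2) ^ ((4 * q : ℕ) : ℤ) by
        rw [zpow_natCast, ← pow_mul, ← this]]
      ext p
      · rw [hA]; simp
      · rw [hA]
        obtain ⟨i, j⟩ := p
        fin_cases i
        · change j + _ * 2 = j
          push_cast
          linear_combination h8
        · change j + _ * (2 * s) = j
          push_cast
          linear_combination s * h8
        · change j + _ * 2 = j
          push_cast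
          linear_combination h8
        · change j + _ * (2 * s) = j
          push_cast
          linear_combination s * h8
    · simp only [map_pow, FreeGroup.lift_apply_of]
      change zsPermB m ^ 4 = 1
      ext p
      · rw [zsPermB_pow]
        change p.1 + 0 = p.1
        exact add_zero _
      · rw [zsPermB_pow]; simp
    · simp only [map_mul, map_inv, map_pow, map_zpow, FreeGroup.lift_apply_of]
      rw [mul_inv_eq_one]
      change zsPermA m c * zsPermB m = zsPermB m ^ 3 * zsPermA m c ^ (2 * t + 1)
      rw [zpow_add_one, zpow_mul, zpow_ofNat]
      ext ⟨i, j⟩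
      · simp only [Equiv.Perm.mul_apply, zsPermB_pow, hA]
        simp only [zsPermA, zsPermB, Equiv.coe_fn_mk]
        revert i; decide
      · simp only [Equiv.Perm.mul_apply, zsPermB_pow, hA]
        simp only [zsPermA, zsPermB, Equiv.coe_fn_mk]
        fin_cases i
        · change j + (2 * t + 1) = j + 1 + t * 2
          ring
        · change j + (1 + 2 * t * (s + 1)) = j + (2 * t + 1) + t * (2 * s)
          ring
        · change j + (2 * t + 1 + 2 * t * (s + 1)) = j + (1 + 2 * t * (s + 1)) + t * 2
          ring
        · change j + 1 = j + (2 * t + 1 + 2 * t * (s + 1)) + t * (2 * s)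
          linear_combination -hG2
    · simp only [map_mul, map_inv, map_pow, map_zpow, FreeGroup.lift_apply_of]
      rw [mul_inv_eq_one]
      change zsPermA m c ^ 2 * zsPermB m = zsPermB m * zsPermA m c ^ (2 * s)
      rw [zpow_mul, zpow_ofNat, ← zpow_one (zsPermA m c ^ 2)]
      ext ⟨i, j⟩
      · simp only [Equiv.Perm.mul_apply, zpow_one, hA]
        rw [← zpow_one (zsPermA m c ^ 2), hA]
        simp only [zsPermB, Equiv.coe_fn_mk]
      · simp only [Equiv.Perm.mul_apply, zpow_one, hA]
        rw [← zpow_one (zsPermA m c ^ 2), hA]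
        simp only [zsPermB, Equiv.coe_fn_mk, Int.cast_one, one_mul]
        fin_cases i
        · change j + 2 * s = j + s * 2
          ring
        · change j + 2 = j + s * (2 * s)
          linear_combination -hG1
        · change j + 2 * s = j + s * 2
          ring
        · change j + 2 = j + s * (2 * s)
          linear_combination -hG1
  let Φ : ZSGroup m t s →* Equiv.Perm (ZMod 4 × ZMod m) := PresentedGroup.toGroup hF
  let a : ZSGroup m t s := PresentedGroup.of 0
  let b : ZSGroup m t s := PresentedGroup.of 1
  have hΦa : Φ a = zsPermA m c := PresentedGroup.toGroup.of hF
  have hΦb : Φ b = zsPermB m := PresentedGroup.toGroup.of hF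
  have ham : a ^ m = 1 :=
    PresentedGroup.one_of_mem (rels := zsRels m t s) (x := FreeGroup.of 0 ^ m) (by simp)
  have hb4 : b ^ 4 = 1 :=
    PresentedGroup.one_of_mem (rels := zsRels m t s) (x := FreeGroup.of 1 ^ 4) (by simp)
  have hab : a * b = b ^ 3 * a ^ (2 * t + 1) :=
    mul_inv_eq_one.1 (PresentedGroup.one_of_mem (rels := zsRels m t s)
      (x := FreeGroup.of 0 * FreeGroup.of 1 *
        (FreeGroup.of 1 ^ 3 * FreeGroup.of 0 ^ (2 * t + 1))⁻¹) (by simp))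
  have haab : a ^ 2 * b = b * a ^ (2 * s) :=
    mul_inv_eq_one.1 (PresentedGroup.one_of_mem (rels := zsRels m t s)
      (x := FreeGroup.of 0 ^ 2 * FreeGroup.of 1 *
        (FreeGroup.of 1 * FreeGroup.of 0 ^ (2 * s))⁻¹) (by simp))
  clear_value Φ
  obtain ⟨f, hf⟩ := exists_zc_hom_zpow m a ham
  have hrep : ∀ x : ZMod m, ∃ k : ℤ, (k : ZMod m) = x := fun x => ZMod.intCast_surjective x
  have heven : ∀ k : ℤ, a ^ (2 * k) * b = b * a ^ (2 * (s * k)) := by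
    intro k
    have h1 : SemiconjBy b (a ^ (2 * s)) (a ^ 2) := haab.symm
    have h2 := (h1.zpow_right k).symm
    rw [← zpow_mul, ← zpow_natCast, ← zpow_mul] at h2
    rw [← mul_assoc]
    exact_mod_cast h2
  have hodd : ∀ k : ℤ, a ^ (2 * k + 1) * b = b ^ 3 * a ^ (2 * (s * k + t) + 1) := by
    intro k
    have h3 : ∀ k : ℤ, a ^ (2 * k) * b ^ 3 = b ^ 3 * a ^ (2 * (s * (s * (s * k)))) := by
      intro k
      rw [pow_succ, pow_two, ← mul_assoc, ← mul_assoc, heven, mul_assoc b, heven, ← mul_assoc,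
        mul_assoc (b * b), heven]
      simp only [mul_assoc]
    rw [zpow_add_one, mul_assoc, hab, ← mul_assoc, h3, mul_assoc, ← zpow_add]
    congr 1
    rw [← hf, ← hf]
    congr 2
    push_cast
    linear_combination s * k * hG1
  refine ⟨{ A := fun x => f (Multiplicative.ofAdd x), b := b, c := fun g => Φ g (0, 0),
            add := fun x y => by rw [ofAdd_add, map_mul], b4 := hb4, even := ?_, odd := ?_,
            coord := ?_, normal_form := ?_, lift := ?_ }⟩
  · intro x
    obtain ⟨k, rfl⟩ := hrep x
    have := heven k
    rw [← hf, ← hf] at this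
    exact_mod_cast this
  · intro x
    obtain ⟨k, rfl⟩ := hrep x
    have := hodd k
    rw [← hf, ← hf] at this
    exact_mod_cast this
  · intro i x
    obtain ⟨k, rfl⟩ := hrep x
    rw [hf, map_mul, map_pow, map_zpow, hΦa, hΦb, Equiv.Perm.mul_apply,
      zsPermA_zpow_zero m c hc, zsPermB_pow, zero_add]
  · have hmul : ∀ (i : ℕ) (x : ZMod m), ∃ (j : ℕ) (y : ZMod m),
        f (Multiplicative.ofAdd x) * b ^ i = b ^ j * f (Multiplicative.ofAdd y) := by
      intro i x
      induction i with
      | zero => exact ⟨0, x, by simp⟩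
      | succ i ih =>
        obtain ⟨j, y, h⟩ := ih
        obtain ⟨k, rfl⟩ := hrep y
        obtain ⟨l, rfl | rfl⟩ := Int.even_or_odd' k
        · refine ⟨j + 1, (2 * (s * l) : ℤ), ?_⟩
          rw [pow_succ, ← mul_assoc, h, mul_assoc, hf, hf, heven, ← mul_assoc, pow_succ]
        · refine ⟨j + 3, (2 * (s * l + t) + 1 : ℤ), ?_⟩
          rw [pow_succ, ← mul_assoc, h, mul_assoc, hf, hf, hodd, ← mul_assoc, pow_add]
    have hgen : ∀ g : ZSGroup m t s, ∃ (i : ℕ) (x : ZMod m),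
        g = b ^ i * f (Multiplicative.ofAdd x) := by
      intro g
      have hA' : ∀ (k : ℤ) (g : ZSGroup m t s),
          (∃ (i : ℕ) (x : ZMod m), g = b ^ i * f (Multiplicative.ofAdd x)) →
          ∃ (i : ℕ) (x : ZMod m), a ^ k * g = b ^ i * f (Multiplicative.ofAdd x) := by
        rintro k g ⟨i, x, rfl⟩
        obtain ⟨j, y, h⟩ := hmul i k
        exact ⟨j, y + x, by rw [← mul_assoc, ← hf, h, mul_assoc, ofAdd_add, map_mul]⟩
      have hg : g ∈ Subgroup.closure (Set.range (PresentedGroup.of (rels := zsRels m t s))) := by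
        rw [PresentedGroup.closure_range_of]; trivial
      induction hg using Subgroup.closure_induction_left with
      | one => exact ⟨0, 0, by simp⟩
      | mul_left x hx y hy ih =>
        obtain ⟨k, rfl⟩ := hx
        fin_cases k
        · simpa using hA' 1 y ih
        · obtain ⟨i, x, rfl⟩ := ih
          exact ⟨i + 1, x, by rw [pow_succ', mul_assoc]; rfl⟩
      | inv_mul_cancel x hx y hy ih =>
        obtain ⟨k, rfl⟩ := hx
        fin_cases k
        · simpa using hA' (-1) y ih
        · obtain ⟨i, x, rfl⟩ := ih
          have hbi : b⁻¹ = b ^ 3 := by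
            rw [inv_eq_iff_mul_eq_one, ← pow_succ', hb4]
          refine ⟨3 + i, x, ?_⟩
          rw [pow_add, ← hbi, mul_assoc]
          rfl
    intro g
    obtain ⟨i, x, rfl⟩ := hgen g
    refine ⟨i % 4, Nat.mod_lt _ (by norm_num), x, ?_⟩
    rw [← pow_eq_pow_mod i hb4]
  · intro X y h1 h2 h3 h4
    have hR : ∀ r ∈ zsRels m t s, FreeGroup.lift ![X, y] r = 1 := by
      rintro r (rfl | rfl | rfl | rfl)
      · simpa using h1
      · simpa using h2
      · rw [map_mul, map_inv, mul_inv_eq_one]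
        simpa using h3
      · rw [map_mul, map_inv, mul_inv_eq_one]
        simpa using h4
    refine ⟨PresentedGroup.toGroup hR, ?_, PresentedGroup.toGroup.of hR⟩
    rw [← Int.cast_one, hf, zpow_one]
    exact PresentedGroup.toGroup.of hR

/-- Arithmetic conditions on the parameters; `n` stands for `m / (2d)`. -/
structure ZSParams (m q d n : ℕ) (t s : ℤ) : Prop where
  hm : m = 8 * q
  q_odd : Odd q
  d_odd : Odd d
  t_odd : Odd t
  s_odd : Odd s
  hn : d * n = 4 * q
  hG1 : (2 * s ^ 2 : ZMod m) = 2
  hG2 : (4 * t * (s + 1) : ZMod m) = 0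
  hG3 : (2 * (t + 1) * (s - 1) : ZMod m) = 0
  hd : (2 * d * (s + 1) : ZMod m) = 2 * t * (s + 1)
  hds : (d : ℤ) ∣ s - 1

namespace ZSParams

variable {m q d n : ℕ} {t s : ℤ}

theorem q_pos (P : ZSParams m q d n t s) : 0 < q := P.q_odd.pos

theorem m_pos (P : ZSParams m q d n t s) : 0 < m := by have := P.q_pos; have := P.hm; omega

theorem eight_q (P : ZSParams m q d n t s) : (8 * q : ZMod m) = 0 := by
  have : ((8 * q : ℕ) : ZMod m) = 0 := by rw [← P.hm]; simp
  exact_mod_cast this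

theorem intCast_eq_zero (P : ZSParams m q d n t s) {k : ℤ} :
    (k : ZMod m) = 0 ↔ (8 * q : ℤ) ∣ k := by
  rw [ZMod.intCast_zmod_eq_zero_iff_dvd, P.hm]
  push_cast
  rfl

theorem even_or_odd (P : ZSParams m q d n t s) (x : ZMod m) :
    ∃ k : ℕ, x = 2 * k ∨ x = 2 * k + 1 := by
  have := P.m_pos
  have : NeZero m := ⟨this.ne'⟩
  obtain ⟨k, h | h⟩ := Nat.even_or_odd' x.val
  · exact ⟨k, Or.inl (by rw [← ZMod.natCast_zmod_val x, h]; push_cast; rfl)⟩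
  · exact ⟨k, Or.inr (by rw [← ZMod.natCast_zmod_val x, h]; push_cast; rfl)⟩

theorem odd_ne_even (P : ZSParams m q d n t s) (k l : ZMod m) : 2 * k + 1 ≠ 2 * l := by
  intro h
  have h2 : (2 : ℕ) ∣ m := ⟨4 * q, by rw [P.hm]; ring⟩
  have := congrArg (ZMod.castHom h2 (ZMod 2)) h
  simp only [map_add, map_mul, map_one, map_ofNat] at this
  rw [show (2 : ZMod 2) = 0 from rfl] at this
  simp at this

theorem exists_of_two_mul (P : ZSParams m q d n t s) {x : ZMod m} (h : 2 * x = 0) :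
    x = 0 ∨ x = 4 * q := by
  obtain ⟨k, rfl⟩ := ZMod.intCast_surjective x
  have h2 : ((2 * k : ℤ) : ZMod m) = 0 := by push_cast; exact h
  rw [P.intCast_eq_zero] at h2
  obtain ⟨l, hl⟩ := h2
  obtain ⟨i, rfl | rfl⟩ := Int.even_or_odd' l
  · left
    rw [P.intCast_eq_zero]
    exact ⟨i, by linarith⟩
  · right
    have : k = 8 * q * i + 4 * q := by linarith
    rw [this]
    push_cast
    rw [P.eight_q]
    ring

theorem unit_odd (P : ZSParams m q d n t s) (u : (ZMod m)ˣ) :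
    ∃ k : ℕ, (u : ZMod m) = 2 * k + 1 := by
  obtain ⟨k, h | h⟩ := P.even_or_odd u
  · exfalso
    have h1 := u.mul_inv
    rw [h] at h1
    exact P.odd_ne_even 0 (k * (u⁻¹ : (ZMod m)ˣ)) (by rw [← mul_assoc, h1]; ring)
  · exact ⟨k, h⟩

theorem isUnit_of_two_mul (P : ZSParams m q d n t s) {x z : ZMod m} (h : 2 * (x * z) = 2) :
    IsUnit x := by
  have h1 : 2 * (1 - x * z) = 0 := by linear_combination -h
  have h2 : (1 - x * z) ^ 2 = 0 := by
    rcases P.exists_of_two_mul h1 with h | h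
    · rw [h]; ring
    · rw [h]; linear_combination 2 * (q : ZMod m) * P.eight_q
  exact IsUnit.of_mul_eq_one (z * (2 - x * z)) (by linear_combination -h2)

theorem four_q_ne_zero (P : ZSParams m q d n t s) : (4 * q : ZMod m) ≠ 0 := by
  intro h
  have : ((4 * q : ℤ) : ZMod m) = 0 := by push_cast; exact h
  rw [P.intCast_eq_zero] at this
  have := Int.le_of_dvd (by have := P.q_pos; omega) this
  have := P.q_pos
  omega

end ZSParams

namespace ZSModel

variable {m q d n : ℕ} {t s : ℤ} {G : Type*} [Group G] (M : ZSModel m t s G)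

theorem A_zero : M.A 0 = 1 := by
  have := M.add 0 0
  simpa using this

theorem A_neg (x : ZMod m) : M.A (-x) = (M.A x)⁻¹ := by
  rw [eq_inv_iff_mul_eq_one, ← M.add, neg_add_cancel, M.A_zero]

theorem A_zpow (x : ZMod m) (k : ℤ) : M.A x ^ k = M.A (k * x) := by
  let f : Multiplicative (ZMod m) →* G :=
    { toFun := fun x => M.A x.toAdd, map_one' := M.A_zero, map_mul' := fun x y => M.add _ _ }
  have h := map_zpow f (Multiplicative.ofAdd x) k
  change M.A (k • x) = M.A x ^ k at h
  rw [← h, zsmul_eq_mul]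

theorem A_pow (x : ZMod m) (k : ℕ) : M.A x ^ k = M.A (k * x) := by
  have := M.A_zpow x k
  rw [zpow_natCast] at this
  rw [this]
  push_cast
  rfl

theorem A_m (x : ZMod m) : M.A x ^ m = 1 := by
  rw [M.A_pow]
  simp [M.A_zero]

theorem A_eq_zpow (x : ZMod m) : ∃ k : ℤ, (k : ZMod m) = x ∧ M.A x = M.A 1 ^ k := by
  obtain ⟨k, rfl⟩ := ZMod.intCast_surjective x
  exact ⟨k, rfl, by rw [M.A_zpow, mul_one]⟩

theorem nf_inj {i j : ℕ} {x y : ZMod m} (h : M.b ^ i * M.A x = M.b ^ j * M.A y) :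
    (i : ZMod 4) = j ∧ x = y := by
  have := congrArg M.c h
  rw [M.coord, M.coord] at this
  exact Prod.mk.inj this

theorem A_inj {x y : ZMod m} (h : M.A x = M.A y) : x = y :=
  (M.nf_inj (i := 0) (j := 0) (by rw [h])).2

theorem A_one_iff {x : ZMod m} : M.A x = 1 ↔ x = 0 := by
  rw [← M.A_zero]
  exact ⟨M.A_inj, congrArg _⟩

theorem closure_eq (R : Subgroup G) (hA : M.A 1 ∈ R) (hb : M.b ∈ R) (g : G) : g ∈ R := by
  obtain ⟨i, -, x, rfl⟩ := M.normal_form g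
  obtain ⟨k, -, h⟩ := M.A_eq_zpow x
  rw [h]
  exact R.mul_mem (R.pow_mem hb i) (R.zpow_mem hA k)

theorem finite (M : ZSModel m t s G) [NeZero m] : Finite G := by
  refine Finite.of_injective M.c fun g h e => ?_
  obtain ⟨i, hi, x, rfl⟩ := M.normal_form g
  obtain ⟨j, hj, y, rfl⟩ := M.normal_form h
  rw [M.coord, M.coord] at e
  obtain ⟨e1, rfl⟩ := Prod.mk.inj e
  rw [ZMod.natCast_eq_natCast_iff', Nat.mod_eq_of_lt hi, Nat.mod_eq_of_lt hj] at e1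
  rw [e1]

theorem aut_ext {φ ψ : MulAut G} (h1 : φ (M.A 1) = ψ (M.A 1)) (h2 : φ M.b = ψ M.b) : φ = ψ := by
  ext g
  exact M.closure_eq (MonoidHom.eqLocus φ.toMonoidHom ψ.toMonoidHom) h1 h2 g

theorem exists_aut [NeZero m] (X y : G) (h1 : X ^ m = 1) (h2 : y ^ 4 = 1)
    (h3 : X * y = y ^ 3 * X ^ (2 * t + 1)) (h4 : X ^ 2 * y = y * X ^ (2 * s))
    (hgen : ∀ R : Subgroup G, X ∈ R → y ∈ R → M.A 1 ∈ R ∧ M.b ∈ R) :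
    ∃ φ : MulAut G, φ (M.A 1) = X ∧ φ M.b = y := by
  obtain ⟨φ, hX, hy⟩ := M.lift X y h1 h2 h3 h4
  have hR := hgen φ.range ⟨_, hX⟩ ⟨_, hy⟩
  have hsurj : Function.Surjective φ := fun g => M.closure_eq φ.range hR.1 hR.2 g
  have := M.finite
  exact ⟨MulEquiv.ofBijective φ ⟨Finite.injective_iff_surjective.2 hsurj, hsurj⟩, hX, hy⟩

theorem map_A {F : Type*} [FunLike F G G] [MonoidHomClass F G G] (φ : F) {u : ZMod m}
    (h : φ (M.A 1) = M.A u) (x : ZMod m) : φ (M.A x) = M.A (u * x) := by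
  obtain ⟨k, rfl, hk⟩ := M.A_eq_zpow x
  rw [hk, map_zpow, h, M.A_zpow, mul_comm]

theorem even_b2 (k : ZMod m) (hG1 : (2 * s ^ 2 : ZMod m) = 2) :
    M.A (2 * k) * M.b ^ 2 = M.b ^ 2 * M.A (2 * k) := by
  rw [pow_two, ← mul_assoc, M.even, mul_assoc, M.even, ← mul_assoc]
  congr 2
  linear_combination k * hG1

theorem even_b3 (k : ZMod m) (hG1 : (2 * s ^ 2 : ZMod m) = 2) :
    M.A (2 * k) * M.b ^ 3 = M.b ^ 3 * M.A (2 * (s * k)) := by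
  rw [pow_succ, ← mul_assoc, M.even_b2 k hG1, mul_assoc, M.even, ← mul_assoc]

theorem b_even_mul (i : ℕ) (k l : ZMod m) :
    (M.b ^ i * M.A (2 * k)) * (M.b * M.A (2 * l)) = M.b ^ (i + 1) * M.A (2 * (s * k + l)) := by
  rw [mul_assoc, ← mul_assoc (M.A _), M.even, mul_assoc, ← M.add, ← mul_assoc, ← pow_succ, mul_add]

theorem b_even_sq (l : ZMod m) : (M.b * M.A (2 * l)) ^ 2 = M.b ^ 2 * M.A (2 * l * (s + 1)) := by
  have := M.b_even_mul 1 l l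
  rw [pow_one] at this
  rw [pow_two, this]
  congr 2
  ring

theorem b_even_cube (l : ZMod m) (hG1 : (2 * s ^ 2 : ZMod m) = 2) :
    (M.b * M.A (2 * l)) ^ 3 = M.b ^ 3 * M.A (2 * l * (s + 2)) := by
  have := M.b_even_mul 2 (l * (s + 1)) l
  rw [pow_succ, b_even_sq, mul_assoc 2 l, this]
  congr 2
  linear_combination l * hG1

theorem b_even_four (l : ZMod m) (hG1 : (2 * s ^ 2 : ZMod m) = 2) :
    (M.b * M.A (2 * l)) ^ 4 = M.A (4 * l * (s + 1)) := by
  have := M.b_even_mul 3 (l * (s + 2)) l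
  rw [pow_succ, b_even_cube _ _ hG1, mul_assoc 2 l, this, M.b4, one_mul]
  congr 1
  linear_combination l * hG1

theorem b3_even_mul (l k : ZMod m) (hG1 : (2 * s ^ 2 : ZMod m) = 2) :
    M.b ^ 3 * M.A (2 * l) * (M.b ^ 3 * M.A (2 * k)) = M.b ^ 2 * M.A (2 * (s * l + k)) := by
  rw [mul_assoc, ← mul_assoc (M.A _), M.even_b3 _ hG1, mul_assoc, ← M.add, ← mul_assoc,
    ← pow_add, mul_add, show 3 + 3 = 4 + 2 from rfl, pow_add M.b 4, M.b4, one_mul]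

theorem b3_even_cube (l : ZMod m) (hG1 : (2 * s ^ 2 : ZMod m) = 2) :
    (M.b ^ 3 * M.A (2 * l)) ^ 3 = M.b * M.A (2 * l * (s + 2)) := by
  rw [pow_succ, pow_two, M.b3_even_mul _ _ hG1, mul_assoc, ← mul_assoc (M.A _),
    M.even_b3 _ hG1, mul_assoc, ← M.add, ← mul_assoc, ← pow_add, show 2 + 3 = 4 + 1 from rfl,
    pow_add M.b 4, M.b4, one_mul, pow_one]
  congr 2
  linear_combination l * hG1

theorem A_b2 (P : ZSParams m q d n t s) (x : ZMod m) :
    M.A x * M.b ^ 2 = M.b ^ 2 * M.A (x + 2 * t * (s + 1) * x) := by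
  obtain ⟨k, rfl | rfl⟩ := P.even_or_odd x
  · rw [M.even_b2 _ P.hG1]
    congr 2
    linear_combination -k * P.hG2
  · rw [pow_two, ← mul_assoc, M.odd, mul_assoc, M.odd, ← mul_assoc, ← pow_add,
      show 3 + 3 = 4 + 2 from rfl, pow_add M.b 4, M.b4, one_mul, ← pow_two]
    congr 2
    linear_combination k * P.hG1 - k * P.hG2

theorem b2_mul (P : ZSParams m q d n t s) (x y : ZMod m) : M.b ^ 2 * M.A x * (M.b ^ 2 * M.A y) =
    M.A (x + 2 * t * (s + 1) * x + y) := by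
  rw [mul_assoc, ← mul_assoc (M.A _), M.A_b2 P, mul_assoc, ← M.add, ← mul_assoc,
      ← pow_add, M.b4, one_mul]

theorem b2_sq (P : ZSParams m q d n t s) (x : ZMod m) :
    (M.b ^ 2 * M.A x) ^ 2 = M.A (2 * x + 2 * t * (s + 1) * x) := by
  rw [pow_two, M.b2_mul P]
  congr 1
  ring

theorem odd_b3 (P : ZSParams m q d n t s) (k : ZMod m) : M.A (2 * k + 1) * M.b ^ 3 =
    M.b * M.A (2 * (s * (k + t * (s + 1)) + t) + 1) := by
  rw [pow_succ, ← mul_assoc, M.A_b2 P, mul_assoc,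
    show 2 * k + 1 + 2 * t * (s + 1) * (2 * k + 1) = 2 * (k + t * (s + 1)) + 1 by
      linear_combination k * P.hG2,
    M.odd, ← mul_assoc, ← pow_add, show 2 + 3 = 4 + 1 from rfl, pow_add M.b 4, M.b4, one_mul,
    pow_one]

theorem map_A_b2 (P : ZSParams m q d n t s)
    {F : Type*} [FunLike F G G] [MonoidHomClass F G G] (φ : F)
    (h : φ (M.A 1) = M.b ^ 2 * M.A 1) (k : ZMod m) :
    φ (M.A (2 * k)) = M.A ((2 + 2 * t * (s + 1)) * k) ∧
    φ (M.A (2 * k + 1)) = M.b ^ 2 * M.A ((2 + 2 * t * (s + 1)) * k + 1) := by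
  have h1 : ∀ k : ZMod m, φ (M.A (2 * k)) = M.A ((2 + 2 * t * (s + 1)) * k) := by
    intro k
    obtain ⟨l, rfl⟩ := ZMod.intCast_surjective k
    have h2 := M.A_zpow 2 l
    have h3 := M.A_pow 1 2
    rw [mul_comm] at h2
    rw [← h2, map_zpow]
    rw [Nat.cast_ofNat, mul_one] at h3
    rw [← h3, map_pow, h, M.b2_sq P, M.A_zpow]
    congr 1
    ring
  refine ⟨h1 k, ?_⟩
  rw [add_comm, M.add, map_mul, h, h1, mul_assoc, ← M.add, add_comm]

theorem exists_sigma (P : ZSParams m q d n t s) : ∃ σ : (ZMod m)ˣ →* MulAut G, ∀ u : (ZMod m)ˣ,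
    (∀ x, σ u (M.A x) = M.A (u * x)) ∧ σ u M.b = M.b * M.A (t * (1 - u)) := by
  have : NeZero m := ⟨P.m_pos.ne'⟩
  have key : ∀ u : (ZMod m)ˣ, ∃ φ : MulAut G, φ (M.A 1) = M.A u ∧
      φ M.b = M.b * M.A (t * (1 - u)) := by
    intro u
    obtain ⟨j, hj⟩ := P.unit_odd u
    have hw : t * (1 - u : ZMod m) = 2 * (-(t * j)) := by rw [hj]; ring
    refine M.exists_aut _ _ (M.A_m _) ?_ ?_ ?_ ?_
    · rw [hw, M.b_even_four _ P.hG1, M.A_one_iff]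
      linear_combination -j * P.hG2
    · rw [hw, M.b_even_cube _ P.hG1, M.A_zpow, hj, ← mul_assoc, M.odd, mul_assoc, mul_assoc,
        ← M.add, ← M.add]
      congr 2
      push_cast
      linear_combination (j : ZMod m) * P.hG3
    · rw [hw, M.A_pow, M.A_zpow, ← mul_assoc, Nat.cast_ofNat, M.even, mul_assoc, mul_assoc,
        ← M.add, ← M.add]
      congr 2
      push_cast
      ring
    · intro R hX hy
      have hA : ∀ x, M.A x ∈ R := by
        intro x
        obtain ⟨k, hk⟩ := ZMod.intCast_surjective (x * ((u⁻¹ : (ZMod m)ˣ) : ZMod m))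
        have := R.zpow_mem hX k
        rw [M.A_zpow, hk, mul_assoc, u.inv_mul, mul_one] at this
        exact this
      exact ⟨hA 1, (R.mul_mem_cancel_right (hA _)).1 hy⟩
  choose σ hA hb using key
  have hA' : ∀ u x, σ u (M.A x) = M.A (u * x) := fun u => M.map_A _ (hA u)
  have hmul : ∀ u v, σ (u * v) = σ u * σ v := by
    intro u v
    refine M.aut_ext ?_ ?_
    · rw [hA', MulAut.mul_apply, hA', hA', Units.val_mul, mul_assoc]
    · rw [hb, MulAut.mul_apply, hb, map_mul, hA', hb, mul_assoc, ← M.add, Units.val_mul]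
      congr 2
      ring
  exact ⟨MonoidHom.mk' σ hmul, fun u => ⟨hA' u, hb u⟩⟩

end ZSModel

namespace ZSModel

variable {m q d n : ℕ} {t s : ℤ} {G : Type*} [Group G] (M : ZSModel m t s G)

theorem A_mul_inj {i j : ℕ} (hi : i < 4) (hj : j < 4) {x y : ZMod m}
    (h : M.b ^ i * M.A x = M.b ^ j * M.A y) : i = j ∧ x = y := by
  obtain ⟨e1, e2⟩ := M.nf_inj h
  rw [ZMod.natCast_eq_natCast_iff', Nat.mod_eq_of_lt hi, Nat.mod_eq_of_lt hj] at e1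
  exact ⟨e1, e2⟩

theorem sq_odd_coset (P : ZSParams m q d n t s) (k : ZMod m) :
    (∃ c, (M.b * M.A (2 * k + 1)) ^ 2 = M.A (4 * c)) ∧
    (∃ c, (M.b ^ 3 * M.A (2 * k + 1)) ^ 2 = M.A (4 * c)) := by
  obtain ⟨t', ht⟩ := P.t_odd
  obtain ⟨s', hs⟩ := P.s_odd
  have ht' : (t : ZMod m) = 2 * t' + 1 := by rw [ht]; push_cast; ring
  have hs' : (s : ZMod m) = 2 * s' + 1 := by rw [hs]; push_cast; ring
  constructor
  · refine ⟨s' * k + k + t' + 1, ?_⟩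
    rw [pow_two, mul_assoc, ← mul_assoc (M.A _), M.odd, mul_assoc, ← M.add, ← mul_assoc,
      ← pow_succ', M.b4, one_mul, ht', hs']
    congr 1
    ring
  · refine ⟨s' * k + k + t' + 1 + s * t * (s' + 1), ?_⟩
    rw [pow_two, mul_assoc, ← mul_assoc (M.A _), M.odd_b3 P, mul_assoc, ← M.add, ← mul_assoc,
      ← pow_succ, M.b4, one_mul, ht', hs']
    congr 1
    ring

theorem pow_odd_coset (P : ZSParams m q d n t s) (x : ZMod m) :
    (M.b * M.A x) ^ (4 * q) = 1 ∧ (M.b ^ 3 * M.A x) ^ (4 * q) = 1 := by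
  obtain ⟨s', hs⟩ := P.s_odd
  have hs' : (s : ZMod m) = 2 * s' + 1 := by rw [hs]; push_cast; ring
  have key : ∀ X : G, (∃ c, X ^ 2 = M.A (4 * c)) → X ^ (4 * q) = 1 := by
    rintro X ⟨c, h⟩
    rw [show 4 * q = 2 * (2 * q) by ring, pow_mul, h, M.A_pow, M.A_one_iff]
    push_cast
    linear_combination c * P.eight_q
  have key' : ∀ X : G, (∃ c, X ^ 4 = M.A (8 * c)) → X ^ (4 * q) = 1 := by
    rintro X ⟨c, h⟩
    rw [pow_mul, h, M.A_pow, M.A_one_iff]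
    linear_combination c * P.eight_q
  obtain ⟨k, rfl | rfl⟩ := P.even_or_odd x
  · refine ⟨key' _ ⟨k * (s' + 1), ?_⟩, key' _ ⟨k * (s' + 1), ?_⟩⟩
    · rw [M.b_even_four _ P.hG1, hs']
      congr 1
      ring
    · rw [show 4 = 2 * 2 from rfl, pow_mul, pow_two (M.b ^ 3 * _), M.b3_even_mul _ _ P.hG1,
        pow_two, mul_assoc, ← mul_assoc (M.A _), M.even_b2 _ P.hG1, mul_assoc, ← M.add,
        ← mul_assoc, ← pow_add, M.b4, one_mul, hs']
      congr 1
      ring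
  · exact ⟨key _ (M.sq_odd_coset P k).1, key _ (M.sq_odd_coset P k).2⟩

theorem aut_A_coset (P : ZSParams m q d n t s) (φ : MulAut G) :
    ∃ x : ZMod m, φ (M.A 1) = M.A x ∨ φ (M.A 1) = M.b ^ 2 * M.A x := by
  have hne : φ (M.A 1) ^ (4 * q) ≠ 1 := by
    rw [← map_pow, M.A_pow]
    intro h
    rw [map_eq_one_iff φ φ.injective, M.A_one_iff] at h
    exact P.four_q_ne_zero (by push_cast at h; linear_combination h)
  obtain ⟨i, hi, x, h⟩ := M.normal_form (φ (M.A 1))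
  rw [h] at hne
  refine ⟨x, ?_⟩
  interval_cases i
  · left; rw [h, pow_zero, one_mul]
  · rw [pow_one] at hne
    exact absurd (M.pow_odd_coset P x).1 hne
  · right; exact h
  · exact absurd (M.pow_odd_coset P x).2 hne

theorem aut_A_two (P : ZSParams m q d n t s) (φ : MulAut G) {x : ZMod m}
    (h : φ (M.A 1) = M.A x ∨ φ (M.A 1) = M.b ^ 2 * M.A x) :
    ∃ w : ZMod m, ∀ k, φ (M.A (2 * k)) = M.A (2 * (x * w) * k) := by
  have h2 : ∃ w : ZMod m, φ (M.A 2) = M.A (2 * (x * w)) := by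
    have : M.A 2 = M.A 1 ^ 2 := by
      rw [M.A_pow]; simp
    rcases h with h | h
    · refine ⟨1, ?_⟩
      rw [this, map_pow, h, M.A_pow, mul_one]
      rfl
    · refine ⟨1 + t * (s + 1), ?_⟩
      rw [this, map_pow, h, M.b2_sq P]
      congr 1
      ring
  obtain ⟨w, hw⟩ := h2
  refine ⟨w, fun k => ?_⟩
  obtain ⟨l, rfl⟩ := ZMod.intCast_surjective k
  have := M.A_zpow 2 l
  rw [mul_comm, ← this, map_zpow, hw, M.A_zpow, mul_comm]

theorem aut_A (P : ZSParams m q d n t s) (φ : MulAut G) :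
    ∃ u : (ZMod m)ˣ, φ (M.A 1) = M.A u ∨ φ (M.A 1) = M.b ^ 2 * M.A u := by
  obtain ⟨x, hx⟩ := M.aut_A_coset P φ
  obtain ⟨y, hy⟩ := M.aut_A_coset P φ⁻¹
  obtain ⟨w, hw⟩ := M.aut_A_two P φ hx
  obtain ⟨v, hv⟩ := M.aut_A_two P φ⁻¹ hy
  have h : φ (φ⁻¹ (M.A (2 * 1))) = M.A (2 * 1) := by
    rw [← MulAut.mul_apply, mul_inv_cancel, MulAut.one_apply]
  rw [hv, mul_one, hw] at h
  have h' := M.A_inj h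
  obtain ⟨u, rfl⟩ := P.isUnit_of_two_mul (x := x) (z := w * (y * v)) (by linear_combination h')
  exact ⟨u, hx⟩

theorem aut_b_sq_ne (P : ZSParams m q d n t s) (φ : MulAut G) (w : ZMod m) :
    φ M.b ^ 2 ≠ M.A w := by
  intro h
  have hb : ∀ w, M.b ^ 2 ≠ M.A w := by
    intro w e
    have := (M.A_mul_inj (i := 2) (j := 0) (x := 0) (y := w) (by norm_num) (by norm_num)
      (by rw [M.A_zero, mul_one, e, pow_zero, one_mul])).1
    omega
  have h4 : M.A (2 * w) = 1 := by
    rw [two_mul, M.add, ← h, ← pow_add, ← map_pow, M.b4, map_one]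
  rw [M.A_one_iff] at h4
  obtain ⟨u, hu⟩ := M.aut_A P φ
  obtain ⟨v, hv⟩ := M.aut_A_two P φ hu
  rcases P.exists_of_two_mul h4 with rfl | rfl
  · rw [M.A_zero, ← map_pow, map_eq_one_iff φ φ.injective, ← M.A_zero] at h
    exact hb _ h
  · have h5 := hv (2 * q)
    have h6 : M.A (2 * (u * v) * (2 * q)) = M.A (4 * q) := by
      rcases P.exists_of_two_mul (x := 2 * (u * v) * (2 * q))
        (by linear_combination u * v * P.eight_q) with h7 | h7
      · exfalso
        rw [h7, M.A_zero, map_eq_one_iff φ φ.injective, M.A_one_iff] at h5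
        exact P.four_q_ne_zero (by linear_combination h5)
      · rw [h7]
    rw [h6, ← h, ← map_pow] at h5
    exact hb _ (φ.injective h5).symm

theorem aut_b (P : ZSParams m q d n t s) (φ : MulAut G) :
    ∃ l : ZMod m, φ M.b = M.b * M.A (2 * l) ∨ φ M.b = M.b ^ 3 * M.A (2 * l) := by
  have hne := M.aut_b_sq_ne P φ
  obtain ⟨i, hi, x, h⟩ := M.normal_form (φ M.b)
  rw [h] at hne
  obtain ⟨k, rfl | rfl⟩ := P.even_or_odd x <;> refine ⟨k, ?_⟩ <;> interval_cases i
  · exact absurd (by rw [pow_zero, one_mul, M.A_pow]) (hne _)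
  · left; rw [h, pow_one]
  · exact absurd (M.b2_sq P _) (hne _)
  · right; exact h
  · exact absurd (by rw [pow_zero, one_mul, M.A_pow]) (hne _)
  · obtain ⟨c, hc⟩ := (M.sq_odd_coset P k).1
    exact absurd (by rw [pow_one, hc]) (hne _)
  · exact absurd (M.b2_sq P _) (hne _)
  · obtain ⟨c, hc⟩ := (M.sq_odd_coset P k).2
    exact absurd hc (hne _)

/-- If `b * A (2 * l)` has order dividing four, then `l` is divisible by `d`. -/
theorem d_dvd (P : ZSParams m q d n t s) {l : ℕ} (h : (M.b * M.A (2 * l)) ^ 4 = 1) : d ∣ l := by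
  rw [M.b_even_four _ P.hG1, M.A_one_iff] at h
  have h2 : ((4 * l * (s + 1) : ℤ) : ZMod m) = 0 := by push_cast; exact h
  rw [P.intCast_eq_zero] at h2
  have h4 : (d : ℤ) ∣ 8 * q := ⟨2 * n, by have := P.hn; zify at this; linear_combination -2 * this⟩
  have h3 : (d : ℤ) ∣ 8 * l := by
    have e : (8 * l : ℤ) = 4 * l * (s + 1) - 4 * l * (s - 1) := by ring
    rw [e]
    exact dvd_sub (h4.trans h2) (dvd_mul_of_dvd_right P.hds _)
  have hc : IsCoprime (d : ℤ) 8 := by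
    rw [Int.isCoprime_iff_gcd_eq_one]
    have : Nat.Coprime d (2 ^ 3) := (Nat.coprime_two_right.2 P.d_odd).pow_right 3
    exact this
  exact Int.natCast_dvd_natCast.1 (hc.dvd_of_dvd_mul_left h3)

end ZSModel

namespace ZSParams

variable {m q d n : ℕ} {t s : ℤ}

theorem dvd_of_two_d_mul (P : ZSParams m q d n t s) {k : ℕ} (h : (2 * d * k : ZMod m) = 0) :
    n ∣ k := by
  have h2 : ((2 * d * k : ℕ) : ZMod m) = 0 := by push_cast; exact h
  rw [ZMod.natCast_eq_zero_iff, P.hm, show 8 * q = 2 * d * n by have := P.hn; linarith] at h2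
  exact Nat.dvd_of_mul_dvd_mul_left (by have := P.d_odd.pos; omega) h2

theorem n_pos (P : ZSParams m q d n t s) : 0 < n := by
  have := P.hn
  have := P.q_pos
  rcases Nat.eq_zero_or_pos n with rfl | h
  · omega
  · exact h

theorem t_mul_theta (P : ZSParams m q d n t s) :
    t * (2 * t * (s + 1)) = (2 * t * (s + 1) : ZMod m) := by
  obtain ⟨t', ht⟩ := P.t_odd
  have ht' : (t : ZMod m) = 2 * t' + 1 := by rw [ht]; push_cast; ring
  linear_combination 2 * t * (s + 1) * ht' + t' * P.hG2

end ZSParams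

namespace ZSModel

variable {m q d n : ℕ} {t s : ℤ} {G : Type*} [Group G] (M : ZSModel m t s G)

theorem exists_aut_b2 (P : ZSParams m q d n t s) {l : ZMod m}
    (hl : 2 * l * (s + 1) = 2 * t * (s + 1)) :
    ∃ φ : MulAut G, φ (M.A 1) = M.b ^ 2 * M.A 1 ∧ φ M.b = M.b * M.A (2 * l) := by
  have : NeZero m := ⟨P.m_pos.ne'⟩
  refine M.exists_aut _ _ ?_ ?_ ?_ ?_ ?_
  · have hX : (M.b ^ 2 * M.A 1) ^ m = ((M.b ^ 2 * M.A 1) ^ 2) ^ (4 * q) := by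
      rw [← pow_mul]
      congr 1
      have := P.hm
      omega
    rw [hX, M.b2_sq P, M.A_pow, M.A_one_iff]
    push_cast
    linear_combination (1 + t * (s + 1)) * P.eight_q
  · rw [M.b_even_four _ P.hG1, M.A_one_iff]
    linear_combination 2 * hl + P.hG2
  · have h1 := M.odd 0
    rw [mul_zero, zero_add] at h1
    rw [mul_assoc, ← mul_assoc (M.A 1), h1, M.b_even_cube _ P.hG1, zpow_add_one, zpow_mul,
      zpow_ofNat, M.b2_sq P, M.A_zpow]
    have h2 : ∀ y z, M.b ^ 3 * M.A y * (M.A z * (M.b ^ 2 * M.A 1)) =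
        M.b ^ 2 * (M.b ^ 3 * M.A (y + z + 2 * t * (s + 1) * (y + z) + 1)) := by
      intro y z
      rw [show M.b ^ 3 * M.A y * (M.A z * (M.b ^ 2 * M.A 1)) =
        M.b ^ 3 * (M.A y * M.A z * M.b ^ 2) * M.A 1 by simp only [mul_assoc], ← M.add, M.A_b2 P,
        mul_assoc, mul_assoc, ← M.add, ← mul_assoc, ← mul_assoc, ← pow_add, ← pow_add]
    rw [h2, mul_assoc (M.b ^ 3), ← M.add]
    congr 3
    linear_combination -hl - P.t_mul_theta - (1 + l * (s + 2) + t * (1 + t * (s + 1))) * P.hG2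
  · rw [M.b2_sq P, zpow_mul, zpow_ofNat, M.b2_sq P, M.A_zpow, ← mul_assoc,
      show (2 * 1 + 2 * t * (s + 1) * 1 : ZMod m) = 2 * (1 + t * (s + 1)) by ring, M.even,
      mul_assoc, mul_assoc, ← M.add, ← M.add]
    congr 2
    ring
  · intro R hX hy
    have hA : ∀ x, M.A (2 * x) ∈ R := by
      intro x
      obtain ⟨k, hk⟩ := ZMod.intCast_surjective ((1 + t * (s + 1) : ZMod m) * x)
      have := R.zpow_mem (R.pow_mem hX 2) k
      rw [M.b2_sq P, M.A_zpow, hk] at this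
      convert this using 2
      obtain ⟨s', hs⟩ := P.s_odd
      have hs' : (s : ZMod m) = 2 * s' + 1 := by rw [hs]; push_cast; ring
      linear_combination -x * (s + 1) * P.t_mul_theta - x * (2 + s') * P.hG2 -
        x * (2 * t * (s + 1)) * hs'
    have hb := (R.mul_mem_cancel_right (hA _)).1 hy
    exact ⟨(R.mul_mem_cancel_left (R.pow_mem hb 2)).1 hX, hb⟩

/-- A subgroup of the automorphism group containing enough automorphisms is everything. -/
theorem mem_of_generators (P : ZSParams m q d n t s) (R : Subgroup (MulAut G))
    {σ : (ZMod m)ˣ → MulAut G} (hσ : ∀ u : (ZMod m)ˣ, σ u (M.A 1) = M.A u) (hσR : ∀ u, σ u ∈ R)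
    {α : MulAut G} {l : ZMod m} (hαA : α (M.A 1) = M.b ^ 2 * M.A 1)
    (hαb : α M.b = M.b * M.A (2 * l)) (hαR : α ∈ R)
    {ρ : MulAut G} {c : ZMod m} (hρA : ρ (M.A 1) = M.A 1)
    (hρb : ρ M.b = M.b ^ 3 * M.A (2 * c)) (hρR : ρ ∈ R)
    (hR : ∀ (φ : MulAut G) (k : ℕ), φ (M.A 1) = M.A 1 → φ M.b = M.b * M.A (2 * k) → φ ∈ R)
    (φ : MulAut G) : φ ∈ R := by
  have : NeZero m := ⟨P.m_pos.ne'⟩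
  have hR' : ∀ (φ : MulAut G) (k : ZMod m), φ (M.A 1) = M.A 1 → φ M.b = M.b * M.A (2 * k) →
      φ ∈ R := by
    intro φ k h1 h2
    refine hR φ k.val h1 ?_
    rw [ZMod.natCast_zmod_val, h2]
  have h1 : ∀ φ : MulAut G, φ (M.A 1) = M.A 1 → φ ∈ R := by
    intro φ h
    obtain ⟨k, hk | hk⟩ := M.aut_b P φ
    · exact hR' φ k h hk
    · refine (R.mul_mem_cancel_right hρR).1 (hR' (φ * ρ) (k * (s + 2) + c) ?_ ?_)
      · rw [MulAut.mul_apply, hρA, h]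
      · rw [MulAut.mul_apply, hρb, map_mul, map_pow, hk, M.b3_even_cube _ P.hG1, M.map_A φ h,
          mul_assoc, ← M.add]
        congr 2
        ring
  have h2 : ∀ (φ : MulAut G) (u : (ZMod m)ˣ), φ (M.A 1) = M.A u → φ ∈ R := by
    intro φ u h
    refine (R.mul_mem_cancel_right (hσR u⁻¹)).1 (h1 (φ * σ u⁻¹) ?_)
    rw [MulAut.mul_apply, hσ, M.map_A φ h, u.mul_inv]
  obtain ⟨u, hu | hu⟩ := M.aut_A P φ
  · exact h2 φ u hu
  · refine (R.mul_mem_cancel_left hαR).1 ?_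
    obtain ⟨j, hj⟩ := P.unit_odd u
    have hx : ∃ x, (α * φ) (M.A 1) = M.A x := by
      rw [MulAut.mul_apply, hu, map_mul, map_pow, hαb, M.b_even_sq, hj,
        (M.map_A_b2 P α hαA _).2, M.b2_mul P]
      exact ⟨_, rfl⟩
    obtain ⟨x, hx⟩ := hx
    obtain ⟨v, hv | hv⟩ := M.aut_A P (α * φ)
    · exact h2 _ v hv
    · exfalso
      rw [hx] at hv
      have := (M.A_mul_inj (i := 0) (j := 2) (by norm_num) (by norm_num)
        (by rw [pow_zero, one_mul]; exact hv)).1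
      omega

end ZSModel

namespace ZSModel

variable {m q d n : ℕ} {t s : ℤ} {G : Type*} [Group G] (M : ZSModel m t s G)

theorem exists_aut_b_of_theta_eq_zero (P : ZSParams m q d n t s)
    (hθ : (2 * t * (s + 1) : ZMod m) = 0) :
    ∃ φ : MulAut G, φ (M.A 1) = M.A 1 ∧ φ M.b = M.b * M.A (2 * d) := by
  have : NeZero m := ⟨P.m_pos.ne'⟩
  refine M.exists_aut _ _ (M.A_m _) ?_ ?_ ?_ ?_
  · rw [M.b_even_four _ P.hG1, M.A_one_iff]
    linear_combination 2 * P.hd + P.hG2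
  · have h1 := M.odd 0
    rw [mul_zero, zero_add] at h1
    rw [M.b_even_cube _ P.hG1, M.A_zpow, ← mul_assoc, h1, mul_assoc, mul_assoc, ← M.add, ← M.add]
    congr 2
    push_cast
    linear_combination -P.hd - hθ
  · rw [M.A_pow, M.A_zpow, ← mul_assoc, Nat.cast_ofNat, M.even, mul_assoc, mul_assoc, ← M.add,
      ← M.add]
    congr 2
    push_cast
    ring
  · intro R hX hy
    refine ⟨hX, (R.mul_mem_cancel_right ?_).1 hy⟩
    obtain ⟨k, -, hk⟩ := M.A_eq_zpow (2 * d : ZMod m)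
    rw [hk]
    exact R.zpow_mem hX k

theorem exists_aut_b3_of_theta_eq_zero (P : ZSParams m q d n t s)
    (hθ : (2 * t * (s + 1) : ZMod m) = 0) :
    ∃ φ : MulAut G, φ (M.A 1) = M.A 1 ∧ φ M.b = M.b ^ 3 := by
  have : NeZero m := ⟨P.m_pos.ne'⟩
  have hb9 : (M.b ^ 3) ^ 3 = M.b := by
    rw [← pow_mul, show 3 * 3 = 4 + 4 + 1 from rfl, pow_add, pow_add, M.b4, one_mul, one_mul,
      pow_one]
  refine M.exists_aut _ _ (M.A_m _) ?_ ?_ ?_ ?_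
  · rw [← pow_mul, mul_comm, pow_mul, M.b4, one_pow]
  · have h1 := M.odd_b3 P 0
    rw [mul_zero, zero_add] at h1
    rw [h1, hb9, M.A_zpow]
    congr 2
    push_cast
    linear_combination s * hθ
  · rw [M.A_pow, M.A_zpow, Nat.cast_ofNat, M.even_b3 _ P.hG1]
    congr 2
    push_cast
    ring
  · intro R hX hy
    exact ⟨hX, hb9 ▸ R.pow_mem hy 3⟩

theorem nonempty_mulEquiv_of_theta_eq_zero (M : ZSModel m t s G) (P : ZSParams m q d n t s)
    (hθ : (2 * t * (s + 1) : ZMod m) = 0) :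
    ∃ (φ : Zc 2 × (ZMod m)ˣ →* MulAut (Zc n))
      (ψ : Zc 2 →* MulAut (Zc n ⋊[φ] (Zc 2 × (ZMod m)ˣ))),
      Nonempty (MulAut G ≃* (Zc n ⋊[φ] (Zc 2 × (ZMod m)ˣ)) ⋊[ψ] Zc 2) := by
  have : NeZero m := ⟨P.m_pos.ne'⟩
  have : NeZero n := ⟨P.n_pos.ne'⟩
  obtain ⟨σ, hσ⟩ := M.exists_sigma P
  obtain ⟨τ, hτ1, hτb⟩ := M.exists_aut_b_of_theta_eq_zero P hθ
  obtain ⟨α, hα1, hαb⟩ := M.exists_aut_b2 P (l := 0) (by rw [hθ]; ring)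
  obtain ⟨β, hβ1, hβb⟩ := M.exists_aut_b3_of_theta_eq_zero P hθ
  rw [mul_zero, M.A_zero, mul_one] at hαb
  have hτA : ∀ x, τ (M.A x) = M.A x := fun x => by
    rw [M.map_A τ hτ1, one_mul]
  have hβA : ∀ x, β (M.A x) = M.A x := fun x => by
    rw [M.map_A β hβ1, one_mul]
  have hαe : ∀ x, α (M.A (2 * x)) = M.A (2 * x) := fun x => by
    rw [(M.map_A_b2 P α hα1 x).1, hθ, add_zero]
  have hαo : ∀ x, α (M.A (2 * x + 1)) = M.b ^ 2 * M.A (2 * x + 1) := fun x => by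
    rw [(M.map_A_b2 P α hα1 x).2, hθ, add_zero]
  have hτk : ∀ k : ℕ, (∀ x, (τ ^ k) (M.A x) = M.A x) ∧
      (τ ^ k) M.b = M.b * M.A (2 * (d * k)) := by
    intro k
    induction k with
    | zero => simp [M.A_zero]
    | succ k ih =>
      refine ⟨fun x => ?_, ?_⟩
      · rw [pow_succ, MulAut.mul_apply, hτA, ih.1]
      · rw [pow_succ, MulAut.mul_apply, hτb, map_mul, ih.2, ih.1, mul_assoc, ← M.add]
        congr 2
        push_cast
        ring
  have hw : ∀ u : (ZMod m)ˣ, ∃ j : ZMod m, (u : ZMod m) = 2 * j + 1 ∧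
      σ u M.b = M.b * M.A (2 * (-(t * j))) := by
    intro u
    obtain ⟨j, hj⟩ := P.unit_odd u
    refine ⟨j, hj, ?_⟩
    rw [(hσ u).2, hj]
    congr 2
    ring
  have hτα : Commute α τ := by
    refine M.aut_ext ?_ ?_
    · rw [MulAut.mul_apply, MulAut.mul_apply, hτ1, hα1, map_mul, map_pow, hτb, hτ1, M.b_even_sq,
        P.hd, hθ, M.A_zero, mul_one]
    · rw [MulAut.mul_apply, MulAut.mul_apply, hτb, hαb, map_mul, hαb, hαe, hτb]
  have hασ : ∀ u, Commute α (σ u) := by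
    intro u
    obtain ⟨j, hj, hb⟩ := hw u
    refine M.aut_ext ?_ ?_
    · rw [MulAut.mul_apply, MulAut.mul_apply, (hσ u).1, hα1, mul_one, map_mul, map_pow, hb,
        (hσ u).1, mul_one, hj, hαo, M.b_even_sq, mul_assoc, ← M.add]
      congr 2
      linear_combination j * hθ
    · rw [MulAut.mul_apply, MulAut.mul_apply, hαb, hb, map_mul, hαb, hαe]
  have hβτ : Commute β τ := by
    refine M.aut_ext ?_ ?_
    · rw [MulAut.mul_apply, MulAut.mul_apply, hτ1, hβ1, hτ1]
    · rw [MulAut.mul_apply, MulAut.mul_apply, hτb, hβb, map_mul, hβb, hβA, map_pow, hτb,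
        M.b_even_cube _ P.hG1]
      congr 2
      linear_combination -P.hd - hθ
  have hβα : Commute β α := by
    refine M.aut_ext ?_ ?_
    · rw [MulAut.mul_apply, MulAut.mul_apply, hα1, hβ1, map_mul, map_pow, hβb, hβ1, hα1,
        ← pow_mul, show 3 * 2 = 4 + 2 from rfl, pow_add, M.b4, one_mul]
    · rw [MulAut.mul_apply, MulAut.mul_apply, hαb, hβb, map_pow, hαb]
  have hβσ : ∀ u, Commute β (σ u) := by
    intro u
    obtain ⟨j, hj, hb⟩ := hw u
    refine M.aut_ext ?_ ?_
    · rw [MulAut.mul_apply, MulAut.mul_apply, hβ1, (hσ u).1, hβA]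
    · rw [MulAut.mul_apply, MulAut.mul_apply, hβb, hb, map_mul, hβb, hβA, map_pow, hb,
        M.b_even_cube _ P.hG1]
      congr 2
      linear_combination j * hθ
  have hσb : ∀ (k : ℕ) u, (τ ^ k * σ u) M.b = M.b * M.A (2 * (d * k) + t * (1 - u)) := by
    intro k u
    rw [MulAut.mul_apply, (hσ u).2, map_mul, (hτk k).1, (hτk k).2, mul_assoc, ← M.add]
  obtain ⟨φ, e, he, heτ, heα, heσ, hex⟩ := exists_semidirectProduct_of_generators n τ α σ (by
      refine M.aut_ext ?_ ?_
      · rw [(hτk n).1]; rfl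
      · rw [(hτk n).2, MulAut.one_apply]
        have := P.hn
        have h : (d * n : ZMod m) = 4 * q := by exact_mod_cast congrArg (Nat.cast (R := ZMod m)) this
        rw [h, show (2 * (4 * q) : ZMod m) = 0 by linear_combination P.eight_q, M.A_zero, mul_one])
    (by
      refine M.aut_ext ?_ ?_
      · rw [pow_two, MulAut.mul_apply, hα1, map_mul, map_pow, hαb, hα1, ← mul_assoc, ← pow_add,
          M.b4, one_mul]
        rfl
      · rw [pow_two, MulAut.mul_apply, hαb, hαb]
        rfl) hασ ⟨1, by rw [pow_one]; exact hτα⟩ (by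
      intro u
      obtain ⟨j, hj⟩ := P.unit_odd u
      refine ⟨2 * j + 1, M.aut_ext ?_ ?_⟩
      · rw [MulAut.mul_apply, MulAut.mul_apply, hτ1, (hσ u).1, (hτk _).1]
      · rw [MulAut.mul_apply, MulAut.mul_apply, hτb, map_mul, (hσ u).2, (hσ u).1, map_mul,
          (hτk _).1, (hτk _).2, mul_assoc, mul_assoc, ← M.add, ← M.add, hj]
        congr 2
        push_cast
        ring) (by
      intro k u h
      have h1 := DFunLike.congr_fun h (M.A 1)
      rw [MulAut.mul_apply, (hσ u).1, (hτk _).1, mul_one, MulAut.one_apply] at h1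
      have hu : u = 1 := Units.ext (M.A_inj h1)
      subst hu
      have h2 := DFunLike.congr_fun h M.b
      rw [hσb, MulAut.one_apply, mul_eq_left, M.A_one_iff, Units.val_one, sub_self, mul_zero,
        add_zero] at h2
      exact ⟨P.dvd_of_two_d_mul (by rw [mul_assoc, h2]), rfl⟩) (by
      intro k u h
      obtain ⟨j, hj⟩ := P.unit_odd u
      have h1 := DFunLike.congr_fun h (M.A 1)
      rw [MulAut.mul_apply, MulAut.mul_apply, (hσ u).1, mul_one, hj, hαo, map_mul, map_pow,
        (hτk _).1, (hτk _).2, M.b_even_sq, mul_assoc, ← M.add, MulAut.one_apply] at h1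
      have := (M.A_mul_inj (i := 2) (j := 0) (by norm_num) (by norm_num)
        (by rw [pow_zero, one_mul]; exact h1)).1
      omega)
  have heb : ∀ x, Commute β (e x) ∧ ∃ c, e x M.b = M.b * M.A c := by
    intro x
    obtain ⟨k, u, h | h⟩ := hex x
    · rw [h]
      exact ⟨(hβτ.pow_right k).mul_right (hβσ u), _, hσb k u⟩
    · rw [h]
      refine ⟨(hβτ.pow_right k).mul_right (hβα.mul_right (hβσ u)), 2 * (d * k) + t * (1 - u), ?_⟩
      obtain ⟨j, hj, hb⟩ := hw u
      rw [MulAut.mul_apply, MulAut.mul_apply, hb, map_mul, hαb, hαe, map_mul, (hτk k).1,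
        (hτk k).2, mul_assoc, ← M.add, hj]
      congr 2
      ring
  have hβ2 : β ^ 2 = 1 := by
    refine M.aut_ext ?_ ?_
    · rw [pow_two, MulAut.mul_apply, hβ1, hβ1]
      rfl
    · rw [pow_two, MulAut.mul_apply, hβb, map_pow, hβb, ← pow_mul, show 3 * 3 = 4 + 4 + 1 from rfl,
        pow_add, pow_add, M.b4, one_mul, one_mul, pow_one]
      rfl
  obtain ⟨g, hg⟩ := exists_zc_hom_zpow 2 β hβ2
  have hg1 : g (Multiplicative.ofAdd 1) = β := by simpa using hg 1
  have hg' : ∀ x : Zc 2, x = 1 ∨ x = Multiplicative.ofAdd 1 := by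
    intro x
    change (x.toAdd : ZMod 2) = 0 ∨ (x.toAdd : ZMod 2) = 1
    generalize (x.toAdd : ZMod 2) = y
    revert y
    decide
  obtain ⟨ψ, e', he', hee'⟩ := exists_semidirectProduct_injective e g (by
      intro x y h
      rcases hg' y with rfl | rfl
      · rw [map_one, mul_one] at h
        exact ⟨he (h.trans (map_one e).symm), rfl⟩
      · exfalso
        rw [hg1, ← (heb x).1.eq] at h
        obtain ⟨c, hc⟩ := (heb x).2
        have h1 := DFunLike.congr_fun h M.b
        rw [MulAut.mul_apply, hc, map_mul, hβb, hβA, MulAut.one_apply] at h1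
        have := (M.A_mul_inj (i := 3) (j := 1) (x := c) (y := 0) (by norm_num) (by norm_num)
          (by rw [M.A_zero, pow_one, mul_one]; exact h1)).1
        omega) (by
      intro y x
      refine ⟨x, ?_⟩
      rcases hg' y with rfl | rfl
      · rw [map_one, inv_one, one_mul, mul_one]
      · rw [hg1, (heb x).1.eq, mul_inv_cancel_right])
  have hle : e.range ≤ e'.range := by
    rintro _ ⟨x, rfl⟩
    exact ⟨⟨x, 1⟩, by rw [hee', map_one, mul_one]⟩
  have hsurj : Function.Surjective e' := by
    intro χ
    refine M.mem_of_generators P e'.range (fun u => ?_) (fun u => hle (heσ u)) (l := 0) hα1 ?_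
      (hle heα) hβ1 (c := 0) ?_ ⟨⟨1, Multiplicative.ofAdd 1⟩, ?_⟩ ?_ χ
    · rw [(hσ u).1, mul_one]
    · rw [hαb, mul_zero, M.A_zero, mul_one]
    · rw [hβb, mul_zero, M.A_zero, mul_one]
    · rw [hee', map_one, one_mul, hg1]
    · intro χ k h1 h2
      obtain ⟨l, rfl⟩ : d ∣ k := M.d_dvd P (by rw [← h2, ← map_pow, M.b4, map_one])
      have : χ = τ ^ l := by
        refine M.aut_ext ?_ ?_
        · rw [h1, (hτk l).1]
        · rw [h2, (hτk l).2]
          push_cast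
          rfl
      rw [this]
      exact pow_mem (hle heτ) l
  exact ⟨φ, ψ, ⟨(MulEquiv.ofBijective e' ⟨he', hsurj⟩).symm⟩⟩

end ZSModel

namespace ZSModel

variable {m q d n : ℕ} {t s : ℤ} {G : Type*} [Group G]

theorem nonempty_mulEquiv_of_theta_eq (M : ZSModel m t s G) (P : ZSParams m q d n t s)
    (hθ : (2 * t * (s + 1) : ZMod m) = 4 * q) :
    ∃ φ : Zc 2 × (ZMod m)ˣ →* MulAut (Zc n),
      Nonempty (MulAut G ≃* Zc n ⋊[φ] (Zc 2 × (ZMod m)ˣ)) := by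
  have : NeZero m := ⟨P.m_pos.ne'⟩
  have : NeZero n := ⟨P.n_pos.ne'⟩
  have h8 := P.eight_q
  have h2d := P.hd
  rw [hθ] at h2d
  obtain ⟨n', hn'⟩ : ∃ n', n = 4 * n' := by
    have hc : Nat.Coprime (2 ^ 2) d := (Nat.coprime_two_left.2 P.d_odd).pow_left 2
    exact hc.dvd_of_dvd_mul_left ⟨q, P.hn⟩
  have hdn : d * n' = q := by
    have := P.hn
    rw [hn'] at this
    linarith
  have hdn' : (d * n' : ZMod m) = q := by rw [← hdn]; push_cast; rfl
  have hn'odd : Odd n' := (Nat.odd_mul.1 (hdn ▸ P.q_odd)).2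
  obtain ⟨t', ht⟩ := P.t_odd
  have ht' : (t : ZMod m) = 2 * t' + 1 := by rw [ht]; push_cast; ring
  obtain ⟨d', hd⟩ := P.d_odd
  have hd' : (d : ZMod m) = 2 * d' + 1 := by rw [hd]; push_cast; ring
  obtain ⟨p, hp⟩ := P.q_odd
  have hp' : (q : ZMod m) = 2 * p + 1 := by rw [hp]; push_cast; ring
  obtain ⟨n₁, hn₁⟩ := hn'odd
  have hn₁' : (n' : ZMod m) = 2 * n₁ + 1 := by rw [hn₁]; push_cast; ring
  obtain ⟨r, hr⟩ : ∃ r : ℤ, s = 4 * r + 1 := by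
    obtain ⟨s', hs⟩ := P.s_odd
    have h : ((2 * t * (s + 1) - 4 * q : ℤ) : ZMod m) = 0 := by
      push_cast
      rw [hθ, sub_self]
    rw [P.intCast_eq_zero] at h
    obtain ⟨k, hk⟩ := h
    have h2 : t * (s' + 1) = q + 2 * (q * k) := by rw [hs] at hk; linarith
    have h3 : Odd (t * (s' + 1)) := by
      rw [h2]
      exact (by exact_mod_cast P.q_odd : Odd (q : ℤ)).add_even (even_two_mul _)
    obtain ⟨e, he⟩ := (Int.odd_mul.1 h3).2
    exact ⟨e, by omega⟩
  have hr' : (s : ZMod m) = 4 * r + 1 := by rw [hr]; push_cast; ring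
  have h4d : (4 * q * d : ZMod m) = 4 * q := by linear_combination 4 * q * hd' + d' * h8
  have h4t : (4 * q * t : ZMod m) = 4 * q := by linear_combination 4 * q * ht' + t' * h8
  have h4n : (4 * q * n' : ZMod m) = 4 * q := by linear_combination 4 * q * hn₁' + n₁ * h8
  have h4q : (4 * q * (4 * q) : ZMod m) = 0 := by linear_combination 2 * q * h8
  obtain ⟨σ, hσ⟩ := M.exists_sigma P
  obtain ⟨τ, hτ1, hτb⟩ := M.exists_aut_b2 P (l := d) P.hd
  have hτe : ∀ x, τ (M.A (2 * x)) = M.A ((2 + 4 * q) * x) := fun x => by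
    rw [(M.map_A_b2 P τ hτ1 x).1, hθ]
  have hτo : ∀ x, τ (M.A (2 * x + 1)) = M.b ^ 2 * M.A ((2 + 4 * q) * x + 1) := fun x => by
    rw [(M.map_A_b2 P τ hτ1 x).2, hθ]
  have hττ : ∀ x, (τ ^ 2) (M.A x) = M.A ((1 + 4 * q) * x) := by
    refine M.map_A _ ?_
    rw [pow_two, MulAut.mul_apply, hτ1, map_mul, map_pow, hτb, hτ1, M.b_even_sq, h2d, mul_assoc,
      ← mul_assoc (M.A _), M.A_b2 P, hθ, mul_assoc, ← M.add, ← mul_assoc, ← pow_add, M.b4, one_mul]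
    congr 1
    linear_combination h4q
  have hτk : ∀ k : ℕ, (∀ x, ((τ ^ 2) ^ k) (M.A x) = M.A ((1 + 4 * q * k) * x)) ∧
      ((τ ^ 2) ^ k) M.b = M.b * M.A (2 * ((2 * d + 2 * q) * k)) := by
    intro k
    induction k with
    | zero => simp [M.A_zero]
    | succ k ih =>
      refine ⟨fun x => ?_, ?_⟩
      · rw [pow_succ, MulAut.mul_apply, hττ, ih.1]
        congr 1
        push_cast
        linear_combination k * x * h4q
      · have hb : (τ ^ 2) M.b = M.b * M.A (4 * d + 4 * q) := by
          rw [pow_two, MulAut.mul_apply, hτb, map_mul, hτb, hτe, mul_assoc, ← M.add]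
          congr 2
          linear_combination h4d
        rw [pow_succ, MulAut.mul_apply, hb, map_mul, ih.2, ih.1, mul_assoc, ← M.add]
        congr 2
        push_cast
        linear_combination k * h4q + 2 * d * k * h8
  let ρ : MulAut G := MulAut.conj (M.A q)
  have hρA : ∀ x, ρ (M.A x) = M.A x := by
    intro x
    rw [MulAut.conj_apply, ← M.A_neg, ← M.add, ← M.add]
    congr 1
    ring
  obtain ⟨c, hc⟩ : ∃ c : ZMod m, c = (s - 1) * p + t := ⟨_, rfl⟩
  have hr0 : (2 * q * (s - 1) : ZMod m) = 0 := by linear_combination 2 * q * hr' + r * h8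
  have hc1 : 2 * c * (s + 1) = (4 * q : ZMod m) := by
    linear_combination 2 * (s + 1) * hc + p * P.hG1 + hθ
  have hc2 : 4 * c = (4 * q : ZMod m) := by
    linear_combination 4 * hc - 2 * (s - 1) * hp' + hr0 - P.hG3 + hθ
  have h4c : (4 * q * c : ZMod m) = 4 * q := by
    linear_combination q * hc2 + 4 * q * hp' + p * h8
  have hρb : ρ M.b = M.b ^ 3 * M.A (2 * c) := by
    rw [MulAut.conj_apply, ← M.A_neg, hp', M.odd, mul_assoc, ← M.add, hc]
    congr 2
    ring
  clear_value ρ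
  have hρ2 : ρ ^ 2 = 1 := by
    refine M.aut_ext ?_ ?_
    · rw [pow_two, MulAut.mul_apply, hρA, hρA]
      rfl
    · rw [pow_two, MulAut.mul_apply, hρb, map_mul, map_pow, hρb, hρA, M.b3_even_cube _ P.hG1,
        mul_assoc, ← M.add, MulAut.one_apply, mul_eq_left, M.A_one_iff]
      linear_combination hc1 + hc2 + h8
  have hw : ∀ u : (ZMod m)ˣ, ∃ i : ℕ, (u : ZMod m) = 2 * i + 1 ∧
      σ u M.b = M.b * M.A (2 * (-(t * i))) := by
    intro u
    obtain ⟨j, hj⟩ := P.unit_odd u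
    refine ⟨j, hj, ?_⟩
    rw [(hσ u).2, hj]
    congr 2
    ring
  have hρσ : ∀ u, Commute ρ (σ u) := by
    intro u
    obtain ⟨i, hi, hb⟩ := hw u
    refine M.aut_ext ?_ ?_
    · rw [MulAut.mul_apply, MulAut.mul_apply, (hσ u).1, hρA, hρA, (hσ u).1]
    · rw [MulAut.mul_apply, MulAut.mul_apply, hb, hρb, map_mul, hρb, hρA, map_mul, map_pow, hb,
        (hσ u).1, M.b_even_cube _ P.hG1, mul_assoc, mul_assoc, ← M.add, ← M.add]
      congr 2
      rw [hi]
      linear_combination i * hθ - i * hc2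
  have hτn : (∀ x, ((τ ^ 2) ^ n') (M.A x) = M.A ((1 + 4 * q) * x)) ∧
      ((τ ^ 2) ^ n') M.b = M.b := by
    refine ⟨fun x => ?_, ?_⟩
    · rw [(hτk n').1, h4n]
    · rw [(hτk n').2, mul_eq_left, M.A_one_iff]
      linear_combination 4 * hdn' + h4n + h8
  have hτi : ∀ i : ℕ, (∀ x, ((τ ^ 2) ^ (i * (1 + n'))) (M.A x) = M.A x) ∧
      ((τ ^ 2) ^ (i * (1 + n'))) M.b = M.b * M.A (2 * (2 * i * (d + q))) := by
    intro i
    refine ⟨fun x => ?_, ?_⟩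
    · rw [(hτk _).1]
      congr 1
      push_cast
      linear_combination i * x * h4n + i * x * h8
    · rw [(hτk _).2]
      congr 2
      push_cast
      linear_combination 4 * i * hdn' + i * h4n + i * h8
  have hodd : ∀ (j : ℕ) (u : (ZMod m)ˣ) (χ : MulAut G), χ (M.A 1) = M.A u →
      τ ^ (2 * j + 1) * χ ≠ 1 := by
    intro j u χ hχ h
    obtain ⟨i, hi⟩ := P.unit_odd u
    have h1 := DFunLike.congr_fun h (M.A 1)
    rw [pow_succ, pow_mul, MulAut.mul_apply, MulAut.mul_apply, hχ, hi, hτo, map_mul, map_pow,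
      (hτk j).1, (hτk j).2, M.b_even_sq, mul_assoc, ← M.add, MulAut.one_apply] at h1
    have := (M.A_mul_inj (i := 2) (j := 0) (by norm_num) (by norm_num)
      (by rw [pow_zero, one_mul]; exact h1)).1
    omega
  obtain ⟨φ, e, he, heτ, heρ, heσ, -⟩ := exists_semidirectProduct_of_generators n τ ρ σ (by
      rw [hn', show 4 * n' = 2 * (2 * n') by ring, pow_mul]
      refine M.aut_ext ?_ ?_
      · rw [(hτk _).1, MulAut.one_apply]
        congr 1
        push_cast
        linear_combination n' * h8
      · rw [(hτk _).2, MulAut.one_apply, mul_eq_left, M.A_one_iff]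
        push_cast
        linear_combination 8 * hdn' + (1 + n') * h8) hρ2 hρσ ⟨2 * n' + 1, by
      refine M.aut_ext ?_ ?_
      · rw [pow_succ, pow_mul, MulAut.mul_apply, MulAut.mul_apply, MulAut.mul_apply, hτ1, hρA,
          hτ1, map_mul, map_mul, map_pow, map_pow, hρb, hρA, hτn.1, hτn.2,
          pow_two (M.b ^ 3 * _), M.b3_even_mul _ _ P.hG1, mul_assoc, ← M.add]
        congr 2
        linear_combination hc1
      · rw [pow_succ, pow_mul, MulAut.mul_apply, MulAut.mul_apply, MulAut.mul_apply, hτb, hρb,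
          map_mul, hρA, hρb, map_mul, map_pow, hτb, hτe, M.b_even_cube _ P.hG1, map_mul, map_mul,
          map_pow, hτn.1, hτn.1, hτn.2]
        simp only [mul_assoc (M.b ^ _), ← M.add]
        congr 2
        linear_combination -h2d - d * (s + 2) * h8 - h4c - c * (1 + 2 * q) * h8 - h8⟩ (by
      intro u
      obtain ⟨i, hi, hb⟩ := hw u
      refine ⟨2 * (i * (1 + n')) + 1, M.aut_ext ?_ ?_⟩
      · rw [pow_succ, pow_mul, MulAut.mul_apply, MulAut.mul_apply, MulAut.mul_apply, hτ1, map_mul,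
          map_pow, hb, (hσ u).1, mul_one, hi, hτo, map_mul, map_pow, (hτi _).1,
          (hτi _).2, M.b_even_sq, M.b_even_sq]
        simp only [mul_assoc (M.b ^ _), ← M.add]
        congr 2
        linear_combination -i * hθ - 2 * i * h2d - 4 * i * q * hr' - i * (2 * r + 1) * h8 - 2 * i * h8
      · rw [pow_succ, pow_mul, MulAut.mul_apply, MulAut.mul_apply, MulAut.mul_apply, hτb, map_mul,
          hb, (hσ u).1, map_mul, hτb, hτe, map_mul, map_mul, (hτi _).1, (hτi _).1, (hτi _).2]
        simp only [mul_assoc M.b, ← M.add]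
        congr 2
        rw [hi]
        linear_combination i * h4t) (by
      intro k u h
      obtain ⟨j, rfl | rfl⟩ := Nat.even_or_odd' k
      · have h1 := DFunLike.congr_fun h (M.A 1)
        rw [pow_mul, MulAut.mul_apply, (hσ u).1, mul_one, MulAut.one_apply, (hτk j).1] at h1
        have h1' := M.A_inj h1
        have h2 := DFunLike.congr_fun h M.b
        rw [pow_mul, MulAut.mul_apply, (hσ u).2, map_mul, (hτk j).1, (hτk j).2, mul_assoc,
          ← M.add, MulAut.one_apply, mul_eq_left, M.A_one_iff] at h2
        have hn : n ∣ 2 * j := P.dvd_of_two_d_mul (by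
          push_cast
          linear_combination h2 + t * h1' - j * h4t - j * h8)
        refine ⟨hn, Units.ext ?_⟩
        obtain ⟨i, hi⟩ : 2 ∣ j := by
          obtain ⟨e, he⟩ := hn
          rw [hn', mul_assoc] at he
          exact ⟨n' * e, by omega⟩
        have hi' : (j : ZMod m) = 2 * i := by rw [hi]; push_cast; ring
        rw [hi'] at h1'
        rw [Units.val_one]
        linear_combination h1' - i * u * h8
      · exact absurd h (hodd j u _ (by rw [(hσ u).1, mul_one]))) (by
      intro k u h
      obtain ⟨j, rfl | rfl⟩ := Nat.even_or_odd' k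
      · have h2 := DFunLike.congr_fun h M.b
        rw [pow_mul, MulAut.mul_apply, MulAut.mul_apply, (hσ u).2, map_mul, hρA, hρb, map_mul,
          map_mul, map_pow, (hτk j).1, (hτk j).1, (hτk j).2, M.b_even_cube _ P.hG1, mul_assoc,
          mul_assoc, ← M.add, ← M.add, MulAut.one_apply] at h2
        have := (M.A_mul_inj (i := 3) (j := 1) (y := 0) (by norm_num) (by norm_num)
          (h2.trans (by rw [M.A_zero, pow_one, mul_one]))).1
        omega
      · exact hodd j u _ (by rw [MulAut.mul_apply, (hσ u).1, hρA, mul_one]) h)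
  have hsurj : Function.Surjective e := by
    intro χ
    refine M.mem_of_generators P e.range (fun u => ?_) heσ hτ1 hτb heτ (hρA 1) hρb heρ ?_ χ
    · rw [(hσ u).1, mul_one]
    · intro χ k h1 h2
      have hdk : d ∣ k := M.d_dvd P (by rw [← h2, ← map_pow, M.b4, map_one])
      have h2k : 2 ∣ k := by
        have h3 := congrArg χ (M.odd 0)
        rw [mul_zero, zero_add, map_mul, map_mul, map_pow, h1, h2, M.map_A χ h1,
          M.b_even_cube _ P.hG1, ← mul_assoc] at h3
        have h4 := M.odd 0
        rw [mul_zero, zero_add] at h4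
        rw [h4, mul_assoc, mul_assoc, ← M.add, ← M.add] at h3
        have h5 := (M.nf_inj h3).2
        have h6 : ((4 * k * (2 * r + 1) : ℤ) : ZMod m) = 0 := by
          push_cast
          linear_combination -h5 - 2 * k * hr'
        rw [P.intCast_eq_zero] at h6
        obtain ⟨v, hv⟩ := h6
        have h7 : (k : ℤ) = 2 * (q * v - k * r) := by linarith
        omega
      obtain ⟨l, rfl⟩ : 2 * d ∣ k :=
        (Nat.coprime_two_left.2 P.d_odd).mul_dvd_of_dvd_of_dvd h2k hdk
      obtain ⟨v, hv⟩ : IsUnit (1 + 4 * q : ZMod m) :=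
        IsUnit.of_mul_eq_one (1 + 4 * q) (by linear_combination h4q + h8)
      have hμ1 : (τ ^ 2 * σ v) (M.A 1) = M.A 1 := by
        rw [MulAut.mul_apply, (hσ v).1, hττ, hv]
        congr 1
        linear_combination h4q + h8
      have hμb : (τ ^ 2 * σ v) M.b = M.b * M.A (4 * d) := by
        rw [MulAut.mul_apply, (hσ v).2, map_mul, hττ, ← pow_one (τ ^ 2), (hτk 1).2, mul_assoc,
          ← M.add, hv]
        congr 2
        push_cast
        linear_combination -h4t - t * h4q
      have hμ : ∀ l : ℕ, ((τ ^ 2 * σ v) ^ l) (M.A 1) = M.A 1 ∧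
          ((τ ^ 2 * σ v) ^ l) M.b = M.b * M.A (4 * d * l) := by
        intro l
        induction l with
        | zero => simp [M.A_zero]
        | succ l ih =>
          have hsplit (g) : ((τ ^ 2 * σ v) ^ (l + 1)) g =
              ((τ ^ 2 * σ v) ^ l) ((τ ^ 2 * σ v) g) := by
            rw [pow_succ]
            rfl
          refine ⟨?_, ?_⟩
          · rw [hsplit, hμ1, ih.1]
          · rw [hsplit, hμb, map_mul, ih.2, M.map_A _ (u := 1) ih.1, mul_assoc, ← M.add]
            congr 2
            push_cast
            ring
      have : χ = (τ ^ 2 * σ v) ^ l := by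
        refine M.aut_ext ?_ ?_
        · rw [h1, (hμ l).1]
        · rw [h2, (hμ l).2]
          congr 2
          push_cast
          ring
      rw [this]
      exact pow_mem (mul_mem (pow_mem heτ 2) (heσ v)) l
  exact ⟨φ, ⟨(MulEquiv.ofBijective e ⟨he, hsurj⟩).symm⟩⟩

end ZSModel

/-- The hypotheses on the parameters, as equations in `ZMod m`. -/
theorem zsParams_of_modEq (m q d : ℕ) (t s : ℤ) (hqodd : Odd q)
    (hm : m = 8 * q) (htodd : Odd t)
    (hG1 : 2 * s ^ 2 ≡ 2 [ZMOD (m : ℤ)])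
    (hG2 : 4 * t * (s + 1) ≡ 0 [ZMOD (m : ℤ)])
    (hG3 : 2 * (t + 1) * (s - 1) ≡ 0 [ZMOD (m : ℤ)])
    (hG4 : Int.gcd s ((m : ℤ) / 2) = 1)
    (htm : Int.gcd t (m : ℤ) = d) : ZSParams m q d (m / (2 * d)) t s := by
  have hdt : (d : ℤ) ∣ t := htm ▸ Int.gcd_dvd_left ..
  have hdm : (d : ℤ) ∣ m := htm ▸ Int.gcd_dvd_right ..
  have hdodd : Odd d := by
    obtain ⟨e, he⟩ := hdt
    exact_mod_cast (Int.odd_mul.1 (he ▸ htodd)).1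
  have hdpos : 0 < d := hdodd.pos
  have hG2' : (4 * t * (s + 1) : ZMod m) = 0 := by
    have := (ZMod.intCast_eq_intCast_iff _ _ m).2 hG2
    exact_mod_cast this
  refine ⟨hm, hqodd, hdodd, htodd, ?_, ?_, ?_, hG2', ?_, ?_, ?_⟩
  · by_contra h
    rw [Int.not_odd_iff_even] at h
    have h2 : (2 : ℤ) ∣ Int.gcd s ((m : ℤ) / 2) :=
      Int.dvd_coe_gcd h.two_dvd ⟨2 * q, by omega⟩
    rw [hG4] at h2
    omega
  · have h8 : d ∣ 2 ^ 3 * q := by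
      rw [show 2 ^ 3 * q = m from hm.symm]
      exact_mod_cast hdm
    obtain ⟨e, rfl⟩ : d ∣ q :=
      ((Nat.coprime_two_right.2 hdodd).pow_right 3).dvd_of_dvd_mul_left h8
    rw [show m = 2 * d * (4 * e) by rw [hm]; ring, Nat.mul_div_cancel_left _ (by omega)]
    ring
  · have := (ZMod.intCast_eq_intCast_iff _ _ m).2 hG1
    exact_mod_cast this
  · have := (ZMod.intCast_eq_intCast_iff _ _ m).2 hG3
    exact_mod_cast this
  · obtain ⟨x, y, h⟩ : ∃ x y : ℤ, (d : ℤ) = t * x + m * y :=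
      ⟨_, _, by rw [← htm]; exact Int.gcd_eq_gcd_ab t m⟩
    have hx : Odd x := by
      have h1 : Odd (t * x) := by
        have h2 : t * x = d - 2 * (4 * q * y) := by rw [h, hm]; push_cast; ring
        rw [h2]
        exact (by exact_mod_cast hdodd : Odd (d : ℤ)).sub_even (even_two_mul _)
      exact (Int.odd_mul.1 h1).2
    obtain ⟨x', hx'⟩ := hx
    have h1 := congrArg (Int.cast (R := ZMod m)) h
    rw [hx'] at h1
    push_cast at h1
    rw [ZMod.natCast_self] at h1
    linear_combination 2 * (s + 1) * h1 + x' * hG2'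
  · have h1 : (d : ℤ) ∣ 2 * (t + 1) * (s - 1) := hdm.trans (Int.modEq_zero_iff_dvd.1 hG3)
    have h2 : IsCoprime (d : ℤ) 2 := by
      rw [Int.isCoprime_iff_gcd_eq_one]
      exact Nat.coprime_two_right.2 hdodd
    have h3 : IsCoprime (d : ℤ) (t + 1) := by
      obtain ⟨e, rfl⟩ := hdt
      exact ⟨-e, 1, by ring⟩
    exact (h2.mul_right h3).dvd_of_dvd_mul_left h1


/-- Let `G = G(m,t,s)` with `m = 8q`, `q > 1` odd, `t` odd, and
`gcd(t,m) = d`.  If `2t(s+1) ≡ 0 (mod m)` then `Aut(G) ≅ (ℤ_{m/2d} ⋊ (ℤ₂ × U(m))) ⋊ ℤ₂`;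
otherwise `Aut(G) ≅ ℤ_{m/2d} ⋊ (ℤ₂ × U(m))`. -/
theorem zs4m_aut_eight_q (m q d : ℕ) (t s : ℤ) (hq1 : 1 < q) (hqodd : Odd q)
    (hm : m = 8 * q) (htodd : Odd t)
    (hs0 : 0 ≤ s) (hsm : s < m)
    (hG1 : 2 * s ^ 2 ≡ 2 [ZMOD (m : ℤ)])
    (hG2 : 4 * t * (s + 1) ≡ 0 [ZMOD (m : ℤ)])
    (hG3 : 2 * (t + 1) * (s - 1) ≡ 0 [ZMOD (m : ℤ)])
    (hG4 : Int.gcd s ((m : ℤ) / 2) = 1)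
    (htm : Int.gcd t (m : ℤ) = d) :
    ((2 * t * (s + 1) ≡ 0 [ZMOD (m : ℤ)]) →
      ∃ (φ : Zc 2 × (ZMod m)ˣ →* MulAut (Zc (m / (2 * d))))
        (ψ : Zc 2 →* MulAut (Zc (m / (2 * d)) ⋊[φ] (Zc 2 × (ZMod m)ˣ))),
        Nonempty (MulAut (ZSGroup m t s) ≃*
          (Zc (m / (2 * d)) ⋊[φ] (Zc 2 × (ZMod m)ˣ)) ⋊[ψ] Zc 2)) ∧
    (¬ (2 * t * (s + 1) ≡ 0 [ZMOD (m : ℤ)]) →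
      ∃ (φ : Zc 2 × (ZMod m)ˣ →* MulAut (Zc (m / (2 * d)))),
        Nonempty (MulAut (ZSGroup m t s) ≃*
          Zc (m / (2 * d)) ⋊[φ] (Zc 2 × (ZMod m)ˣ))) := by
  have P := zsParams_of_modEq m q d t s hqodd hm htodd hG1 hG2 hG3 hG4 htm
  obtain ⟨M⟩ := nonempty_zsModel m q t s hm P.hG1 P.hG2 P.hG3
  have hθ : (2 * t * (s + 1) : ZMod m) = 0 ↔ 2 * t * (s + 1) ≡ 0 [ZMOD (m : ℤ)] := by
    rw [← ZMod.intCast_eq_intCast_iff]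
    push_cast
    rfl
  refine ⟨fun h => M.nonempty_mulEquiv_of_theta_eq_zero P (hθ.2 h), fun h => ?_⟩
  refine M.nonempty_mulEquiv_of_theta_eq P ?_
  exact (P.exists_of_two_mul (by linear_combination P.hG2)).resolve_left fun h0 => h (hθ.1 h0)
end
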